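/- arXiv:1510.06328 — 4 statements merged into one kernel-verified Lean document; each statement's English description precedes it below -/
import Mathlib

section
/- For a permutation σ of length n avoiding 4213, 2413 and 2143, let top(σ) = n − max{k : k is an H-gridding cutoff of σ}. Then top is asymptotically normally distributed with mean n/5 and standard deviation 2√n/5: for every real x, the proportion |{σ ∈ Av_n(4213,2413,2143) : top(σ) ≤ n/5 + x·(2√n/5)}| / |Av_n(4213,2413,2143)| converges, as n → ∞, to Φ(x) = (1/√(2π)) ∫_{−∞}^{x} e^{−t²/2} dt. -/
open Filter Topology PowerSeries

/-- `σ` contains the pattern `π`. -/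
def PatternContains {n k : ℕ} (σ : Equiv.Perm (Fin n)) (π : Fin k → Fin k) : Prop :=
  ∃ f : Fin k → Fin n, StrictMono f ∧ ∀ a b : Fin k, π a < π b ↔ σ (f a) < σ (f b)

/-- `σ` avoids the pattern `π`. -/
def PatternAvoids {n k : ℕ} (σ : Equiv.Perm (Fin n)) (π : Fin k → Fin k) : Prop :=
  ¬ PatternContains σ π

/-- The pattern 4213 (zero-indexed values). -/
def p4213 : Fin 4 → Fin 4 := ![3, 1, 0, 2]

/-- The pattern 2413 (zero-indexed values). -/
def p2413 : Fin 4 → Fin 4 := ![1, 3, 0, 2]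

/-- The pattern 2143 (zero-indexed values). -/
def p2143 : Fin 4 → Fin 4 := ![1, 0, 3, 2]

/-- The pattern 213 (zero-indexed values). -/
def p213 : Fin 3 → Fin 3 := ![1, 0, 2]

/-- `σ` avoids 4213, 2413 and 2143. -/
def AvoidsH {n : ℕ} (σ : Equiv.Perm (Fin n)) : Prop :=
  PatternAvoids σ p4213 ∧ PatternAvoids σ p2413 ∧ PatternAvoids σ p2143

/-- `σ` avoids 4213 and 2143. -/
def AvoidsD {n : ℕ} (σ : Equiv.Perm (Fin n)) : Prop :=
  PatternAvoids σ p4213 ∧ PatternAvoids σ p2143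

/-- An H-gridding of `σ`: a value cutoff `k ∈ {0,…,n}` such that the subsequence of
entries with (1-based) values `> k` is increasing and the subsequence of entries with
values `≤ k` avoids 213. -/
def HGridding {n : ℕ} (σ : Equiv.Perm (Fin n)) (k : ℕ) : Prop :=
  k ≤ n ∧
  (∀ i j : Fin n, i < j → k < (σ i : ℕ) + 1 → k < (σ j : ℕ) + 1 → σ i < σ j) ∧
  ¬ ∃ f : Fin 3 → Fin n, StrictMono f ∧ (∀ a, (σ (f a) : ℕ) + 1 ≤ k) ∧
      (∀ a b : Fin 3, p213 a < p213 b ↔ σ (f a) < σ (f b))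

/-- A G-gridding of `σ`: a pair `(j, k)` with `0 ≤ j, k ≤ n` such that (i) the first `j`
entries have values `≤ k` and are increasing, (ii) the subsequence of entries at
(1-based) positions `> j` with values `> k` is increasing, and (iii) the subsequence of
entries at positions `> j` with values `≤ k` avoids 213. -/
def GGridding {n : ℕ} (σ : Equiv.Perm (Fin n)) (j k : ℕ) : Prop :=
  j ≤ n ∧ k ≤ n ∧
  (∀ i : Fin n, (i : ℕ) < j → (σ i : ℕ) + 1 ≤ k) ∧
  (∀ i₁ i₂ : Fin n, i₁ < i₂ → (i₂ : ℕ) < j → σ i₁ < σ i₂) ∧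
  (∀ i₁ i₂ : Fin n, i₁ < i₂ → j ≤ (i₁ : ℕ) → k < (σ i₁ : ℕ) + 1 → k < (σ i₂ : ℕ) + 1 →
      σ i₁ < σ i₂) ∧
  ¬ ∃ f : Fin 3 → Fin n, StrictMono f ∧ (∀ a, j ≤ ((f a) : ℕ) ∧ (σ (f a) : ℕ) + 1 ≤ k) ∧
      (∀ a b : Fin 3, p213 a < p213 b ↔ σ (f a) < σ (f b))

/-- The number of permutations of length `n` avoiding 4213, 2413 and 2143. -/
noncomputable def hCount (n : ℕ) : ℕ :=
  Nat.card {σ : Equiv.Perm (Fin n) // AvoidsH σ}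

/-- The number of permutations of length `n` avoiding 4213 and 2143. -/
noncomputable def dCount (n : ℕ) : ℕ :=
  Nat.card {σ : Equiv.Perm (Fin n) // AvoidsD σ}

/-- The minimal number of top points over all H-griddings of `σ`. -/
noncomputable def topPts {n : ℕ} (σ : Equiv.Perm (Fin n)) : ℕ :=
  n - sSup {k | HGridding σ k}

/-- The minimal number of left points over all G-griddings of `σ`. -/
noncomputable def leftPts {n : ℕ} (σ : Equiv.Perm (Fin n)) : ℕ :=
  sInf {j | ∃ k, GGridding σ j k}

/-!
Pass to the inverse permutation `τ = σ⁻¹`. Then `σ` avoids the three patterns with `topPts σ = t`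
exactly when the first `n - t` entries of `τ` form a maximal 213-avoiding prefix and the remaining
entries increase. Building `τ` one entry at a time, the 213-avoiding prefixes of length `m` are
counted, according to the largest threshold below which they have no inversions, by ballot numbers
`b m r` (`floorCount`); appending `t` further entries above the threshold contributes a binomial
coefficient, so that up to one exceptional permutation there are
`∑ j, b (n - t) (j + 1) * (n - j - 2).choose t` permutations with `topPts σ = t`.

Fix `j` and put `D = n - j`. Absorbing `D (D - 1)` into the binomial coefficient, and using
`b (u + j) (j + 1) ~ c_j 4 ^ u / u ^ (3 / 2)`, the sum over `t ∈ A` becomes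
`5 ^ D / (D (D - 1))` times the integral over `A` of a weight of order `√(D - t)` against the
binomial law `Bin(D, 1/5)`. By the law of large numbers the weight divided by `√D` is asymptotically
constant, and by the central limit theorem for `Bin(D, 1/5)` the event `A` of `topPts` lying below
the threshold has probability tending to `Φ(x)`, whatever `j` is. Dominated convergence allows
summing over `j`, and the constants cancel in the quotient.
-/

section Gridding

variable {n k : ℕ}

/-- Among its first `k` entries, `τ` has an occurrence of the pattern 213. -/
def Has213Below (τ : Equiv.Perm (Fin n)) (k : ℕ) : Prop :=
  ∃ a b c : Fin n, a < b ∧ b < c ∧ (c : ℕ) < k ∧ τ b < τ a ∧ τ a < τ c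

/-- The entries of `τ` from index `k` on are increasing. -/
def IncreasingFrom (τ : Equiv.Perm (Fin n)) (k : ℕ) : Prop :=
  ∀ i j : Fin n, k ≤ (i : ℕ) → i < j → τ i < τ j

/-- Description of `topPts σ = t`, in terms of the inverse `τ` of `σ`: the first `n - t` entries
of `τ` are a maximal prefix avoiding 213, and the remaining entries are increasing. -/
def HasTop (τ : Equiv.Perm (Fin n)) (t : ℕ) : Prop :=
  t ≤ n ∧ ¬ Has213Below τ (n - t) ∧ IncreasingFrom τ (n - t) ∧
    (0 < t → Has213Below τ (n - t + 1))

lemma Has213Below.mono {τ : Equiv.Perm (Fin n)} {l : ℕ} (h : Has213Below τ k) (hkl : k ≤ l) :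
    Has213Below τ l := by
  obtain ⟨a, b, c, hab, hbc, hck, hba, hac⟩ := h
  exact ⟨a, b, c, hab, hbc, hck.trans_le hkl, hba, hac⟩

lemma exists_p213_iff (σ : Equiv.Perm (Fin n)) (k : ℕ) :
    (∃ f : Fin 3 → Fin n, StrictMono f ∧ (∀ a, (σ (f a) : ℕ) + 1 ≤ k) ∧
      (∀ a b : Fin 3, p213 a < p213 b ↔ σ (f a) < σ (f b))) ↔ Has213Below σ.symm k := by
  constructor
  · rintro ⟨f, hf, hk, h⟩
    refine ⟨σ (f 1), σ (f 0), σ (f 2), (h 1 0).1 (by decide), (h 0 2).1 (by decide), hk 2, ?_, ?_⟩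
    · simpa using hf (show (0 : Fin 3) < 1 by decide)
    · simpa using hf (show (1 : Fin 3) < 2 by decide)
  · rintro ⟨a, b, c, hab, hbc, hck, hba, hac⟩
    refine ⟨![σ.symm b, σ.symm a, σ.symm c], ?_, ?_, ?_⟩
    · rw [Fin.strictMono_iff_lt_succ]
      intro i
      fin_cases i
      exacts [hba, hac]
    · intro i
      fin_cases i <;> simp <;> omega
    · have hac_lt := hab.trans hbc
      intro i j
      fin_cases i <;> fin_cases j <;>
        simp [p213, hab, hab.le, hbc, hbc.le, hac_lt, hac_lt.le]

lemma increasingFrom_symm_iff (σ : Equiv.Perm (Fin n)) (k : ℕ) :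
    IncreasingFrom σ.symm k ↔
      ∀ i j, i < j → k ≤ (σ i : ℕ) → k ≤ (σ j : ℕ) → σ i < σ j := by
  constructor
  · intro h i j hij _ hj
    by_contra! hle
    have hlt := lt_of_le_of_ne hle (σ.injective.ne hij.ne')
    exact hij.asymm (by simpa using h _ _ hj hlt)
  · intro h i j hi hij
    by_contra! hle
    have hlt := lt_of_le_of_ne hle (σ.symm.injective.ne hij.ne')
    exact hij.asymm (by simpa using h _ _ hlt (by simpa using hi.trans hij.le) (by simpa using hi))

lemma hGridding_iff (σ : Equiv.Perm (Fin n)) (k : ℕ) :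
    HGridding σ k ↔ k ≤ n ∧ IncreasingFrom σ.symm k ∧ ¬ Has213Below σ.symm k := by
  rw [HGridding, exists_p213_iff, increasingFrom_symm_iff]
  simp only [Nat.lt_succ_iff]

lemma patternContains_of_lt {σ : Equiv.Perm (Fin n)} (π ρ : Fin 4 → Fin 4)
    (hρ : ∀ a, ρ (π a) = a) {f : Fin 4 → Fin n} (h01 : f 0 < f 1) (h12 : f 1 < f 2)
    (h23 : f 2 < f 3) (g01 : σ (f (ρ 0)) < σ (f (ρ 1))) (g12 : σ (f (ρ 1)) < σ (f (ρ 2)))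
    (g23 : σ (f (ρ 2)) < σ (f (ρ 3))) : PatternContains σ π := by
  have hf : StrictMono f := by
    rw [Fin.strictMono_iff_lt_succ]
    intro i
    fin_cases i
    exacts [h01, h12, h23]
  have hσ : StrictMono fun v => σ (f (ρ v)) := by
    rw [Fin.strictMono_iff_lt_succ]
    intro i
    fin_cases i
    exacts [g01, g12, g23]
  refine ⟨f, hf, fun a b => ?_⟩
  rw [← hσ.lt_iff_lt]
  simp only [hρ]

-- The three forbidden patterns are the positions of a larger entry before the `3` of a 213.
lemma avoidsH_iff (σ : Equiv.Perm (Fin n)) :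
    AvoidsH σ ↔ ∀ x y z w, x < y → y < z → w < z → σ y < σ x → σ x < σ z → σ w ≤ σ z := by
  constructor
  · rintro ⟨h4213, h2413, h2143⟩ x y z w hxy hyz hwz hσyx hσxz
    by_contra! hσzw
    rcases lt_trichotomy w x with hwx | rfl | hxw
    · exact h4213 (patternContains_of_lt p4213 ![2, 1, 3, 0] (by decide) (f := ![w, x, y, z])
        hwx hxy hyz hσyx hσxz hσzw)
    · order
    rcases lt_trichotomy w y with hwy | rfl | hyw
    · exact h2413 (patternContains_of_lt p2413 ![2, 0, 3, 1] (by decide) (f := ![x, w, y, z])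
        hxw hwy hyz hσyx hσxz hσzw)
    · order
    · exact h2143 (patternContains_of_lt p2143 ![1, 0, 3, 2] (by decide) (f := ![x, y, w, z])
        hxy hyw hwz hσyx hσxz hσzw)
  · refine fun h => ⟨?_, ?_, ?_⟩ <;> rintro ⟨f, hf, hσ⟩
    · exact (h (f 1) (f 2) (f 3) (f 0) (hf (by decide)) (hf (by decide)) (hf (by decide))
        ((hσ _ _).1 (by decide)) ((hσ _ _).1 (by decide))).not_gt ((hσ _ _).1 (by decide))
    · exact (h (f 0) (f 2) (f 3) (f 1) (hf (by decide)) (hf (by decide)) (hf (by decide))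
        ((hσ _ _).1 (by decide)) ((hσ _ _).1 (by decide))).not_gt ((hσ _ _).1 (by decide))
    · exact (h (f 0) (f 1) (f 3) (f 2) (hf (by decide)) (hf (by decide)) (hf (by decide))
        ((hσ _ _).1 (by decide)) ((hσ _ _).1 (by decide))).not_gt ((hσ _ _).1 (by decide))

lemma avoidsH_of_hGridding {σ : Equiv.Perm (Fin n)} (h : HGridding σ k) : AvoidsH σ := by
  obtain ⟨-, hinc, h213⟩ := (hGridding_iff σ k).1 h
  refine (avoidsH_iff σ).2 fun x y z w hxy hyz hwz hσyx hσxz => ?_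
  by_contra! hσzw
  rcases le_or_gt k (σ z) with hz | hz
  · exact hwz.asymm (by simpa using hinc _ _ hz hσzw)
  · exact h213 ⟨σ y, σ x, σ z, hσyx, hσxz, hz, by simpa, by simpa⟩

lemma AvoidsH.increasingFrom {σ : Equiv.Perm (Fin n)} (h : AvoidsH σ)
    (h_avoid : ¬ Has213Below σ.symm k) (h_occur : Has213Below σ.symm (k + 1)) :
    IncreasingFrom σ.symm k := by
  rw [avoidsH_iff] at h
  obtain ⟨a, b, c, hab, hbc, hck, hba, hac⟩ := h_occur
  have hc : (c : ℕ) = k := by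
    by_contra hc
    exact h_avoid ⟨a, b, c, hab, hbc, by omega, hba, hac⟩
  have no_larger_before (i j : Fin n) (hbi : b < i) (hij : i < j)
      (hai : σ.symm a < σ.symm i) : σ.symm i < σ.symm j := by
    by_contra! hle
    have hji := lt_of_le_of_ne hle (σ.symm.injective.ne hij.ne')
    have hσ := h _ _ _ _ hba hai hji (by simpa) (by simpa)
    simp only [Equiv.apply_symm_apply] at hσ
    exact hij.not_ge hσ
  intro i j hi hij
  have hci : c ≤ i := Fin.le_def.2 (hc.trans_le hi)
  refine no_larger_before i j (hbc.trans_le hci) hij ?_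
  rcases hci.eq_or_lt with rfl | hci
  · exact hac
  · exact hac.trans (no_larger_before c i hbc hci hac)

lemma exists_maximal_not_has213Below (τ : Equiv.Perm (Fin n)) :
    ∃ k ≤ n, ¬ Has213Below τ k ∧ (k < n → Has213Below τ (k + 1)) := by
  classical
  refine ⟨Nat.findGreatest (fun k => ¬ Has213Below τ k) n, Nat.findGreatest_le n,
    Nat.findGreatest_spec (P := fun k => ¬ Has213Below τ k) n.zero_le ?_, fun hk => ?_⟩
  · rintro ⟨_, _, c, _, _, hc, _⟩
    exact c.1.not_lt_zero hc
  · exact not_not.1 (Nat.findGreatest_is_greatest (Nat.lt_succ_self _) hk)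

lemma hGridding_sSup_eq {σ : Equiv.Perm (Fin n)} (h : HGridding σ k)
    (hk : k < n → Has213Below σ.symm (k + 1)) : sSup {k | HGridding σ k} = k := by
  refine IsGreatest.csSup_eq ⟨h, fun l hl => ?_⟩
  obtain ⟨hln, -, h213⟩ := (hGridding_iff σ l).1 hl
  by_contra! hlt
  exact h213 ((hk (hlt.trans_le hln)).mono hlt)

lemma avoidsH_and_topPts_iff (σ : Equiv.Perm (Fin n)) (t : ℕ) :
    AvoidsH σ ∧ topPts σ = t ↔ HasTop σ.symm t := by
  constructor
  · rintro ⟨h, rfl⟩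
    obtain ⟨k, hkn, h_avoid, h_occur⟩ := exists_maximal_not_has213Below σ.symm
    have hinc : IncreasingFrom σ.symm k := by
      rcases hkn.eq_or_lt with rfl | hlt
      · exact fun i _ hi => absurd i.2 hi.not_gt
      · exact h.increasingFrom h_avoid (h_occur hlt)
    have htop : topPts σ = n - k := by
      rw [topPts, hGridding_sSup_eq ((hGridding_iff σ k).2 ⟨hkn, hinc, h_avoid⟩) h_occur]
    rw [htop, HasTop, Nat.sub_sub_self hkn]
    exact ⟨n.sub_le k, h_avoid, hinc, fun ht => h_occur (Nat.sub_pos_iff_lt.1 ht)⟩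
  · rintro ⟨ht, h_avoid, hinc, h_occur⟩
    have hg := (hGridding_iff σ (n - t)).2 ⟨n.sub_le t, hinc, h_avoid⟩
    refine ⟨avoidsH_of_hGridding hg, ?_⟩
    rw [topPts, hGridding_sSup_eq hg fun hlt => h_occur (by omega), Nat.sub_sub_self ht]

end Gridding

section SnocPerm

variable {n k : ℕ}

/-- Appending a last entry `p` to a permutation, shifting up the entries that are `≥ p`. -/
def snocPerm (τ : Equiv.Perm (Fin n)) (p : Fin (n + 1)) : Equiv.Perm (Fin (n + 1)) :=
  (finSuccEquiv' (Fin.last n)).trans ((Equiv.optionCongr τ).trans (finSuccEquiv' p).symm)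

@[simp] lemma snocPerm_last (τ : Equiv.Perm (Fin n)) (p : Fin (n + 1)) :
    snocPerm τ p (Fin.last n) = p := by
  simp [snocPerm]

@[simp] lemma snocPerm_castSucc (τ : Equiv.Perm (Fin n)) (p : Fin (n + 1)) (i : Fin n) :
    snocPerm τ p i.castSucc = p.succAbove (τ i) := by
  rw [← Fin.succAbove_last_apply i, snocPerm, Equiv.trans_apply, finSuccEquiv'_succAbove]
  simp

lemma snocPerm_bijective (n : ℕ) :
    Function.Bijective fun x : Equiv.Perm (Fin n) × Fin (n + 1) => snocPerm x.1 x.2 := by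
  rw [Fintype.bijective_iff_injective_and_card]
  constructor
  · rintro ⟨τ, p⟩ ⟨τ', p'⟩ (h : snocPerm τ p = snocPerm τ' p')
    obtain rfl : p = p' := by rw [← snocPerm_last τ p, h, snocPerm_last]
    obtain rfl : τ = τ' := by
      ext1 i
      simpa using DFunLike.congr_fun h i.castSucc
    rfl
  · simp [Fintype.card_perm, Nat.factorial_succ, mul_comm]

lemma snocPerm_lt_iff (τ : Equiv.Perm (Fin n)) (p : Fin (n + 1)) (i j : Fin n) :
    snocPerm τ p i.castSucc < snocPerm τ p j.castSucc ↔ τ i < τ j := by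
  simp

lemma succAbove_lt_self_iff (p : Fin (n + 1)) (i : Fin n) : p.succAbove i < p ↔ (i : ℕ) < p := by
  rw [Fin.succAbove_lt_iff_castSucc_lt, Fin.lt_def, Fin.val_castSucc]

lemma val_succAbove (p : Fin (n + 1)) (i : Fin n) :
    (p.succAbove i : ℕ) = if (i : ℕ) < p then (i : ℕ) else i + 1 := by
  rw [Fin.succAbove, apply_ite Fin.val]
  rfl

lemma has213Below_snocPerm (hk : k ≤ n) (τ : Equiv.Perm (Fin n)) (p : Fin (n + 1)) :
    Has213Below (snocPerm τ p) k ↔ Has213Below τ k := by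
  constructor
  · rintro ⟨a, b, c, hab, hbc, hck, hba, hac⟩
    have hc : c < Fin.last n := Fin.lt_def.2 (hck.trans_le hk)
    obtain ⟨a, rfl⟩ := Fin.exists_castSucc_eq.2 ((hab.trans hbc).trans hc).ne
    obtain ⟨b, rfl⟩ := Fin.exists_castSucc_eq.2 (hbc.trans hc).ne
    obtain ⟨c, rfl⟩ := Fin.exists_castSucc_eq.2 hc.ne
    rw [snocPerm_lt_iff] at hba hac
    exact ⟨a, b, c, hab, hbc, hck, hba, hac⟩
  · rintro ⟨a, b, c, hab, hbc, hck, hba, hac⟩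
    exact ⟨a.castSucc, b.castSucc, c.castSucc, hab, hbc, hck, (snocPerm_lt_iff ..).2 hba,
      (snocPerm_lt_iff ..).2 hac⟩

/-- `τ` has an inversion whose larger entry is below `p`. -/
def HasInversionBelow (τ : Equiv.Perm (Fin n)) (p : ℕ) : Prop :=
  ∃ a b : Fin n, a < b ∧ τ b < τ a ∧ (τ a : ℕ) < p

lemma HasInversionBelow.mono {τ : Equiv.Perm (Fin n)} {p q : ℕ} (h : HasInversionBelow τ p)
    (hpq : p ≤ q) : HasInversionBelow τ q := by
  obtain ⟨a, b, hab, hba, hap⟩ := h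
  exact ⟨a, b, hab, hba, hap.trans_le hpq⟩

lemma has213Below_snocPerm_succ (τ : Equiv.Perm (Fin n)) (p : Fin (n + 1)) :
    Has213Below (snocPerm τ p) (n + 1) ↔ Has213Below τ n ∨ HasInversionBelow τ p := by
  constructor
  · rintro ⟨a, b, c, hab, hbc, -, hba, hac⟩
    rcases (Fin.le_last c).lt_or_eq with hc | rfl
    · exact .inl ((has213Below_snocPerm le_rfl τ p).1 ⟨a, b, c, hab, hbc, hc, hba, hac⟩)
    · obtain ⟨a, rfl⟩ := Fin.exists_castSucc_eq.2 (hab.trans hbc).ne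
      obtain ⟨b, rfl⟩ := Fin.exists_castSucc_eq.2 hbc.ne
      rw [snocPerm_lt_iff] at hba
      rw [snocPerm_last, snocPerm_castSucc, succAbove_lt_self_iff] at hac
      exact .inr ⟨a, b, hab, hba, hac⟩
  · rintro (h | ⟨a, b, hab, hba, hap⟩)
    · exact ((has213Below_snocPerm le_rfl τ p).2 h).mono n.le_succ
    · refine ⟨a.castSucc, b.castSucc, Fin.last n, hab, Fin.castSucc_lt_last b, n.lt_succ_self,
        (snocPerm_lt_iff ..).2 hba, ?_⟩
      rwa [snocPerm_last, snocPerm_castSucc, succAbove_lt_self_iff]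

lemma hasInversionBelow_snocPerm {τ : Equiv.Perm (Fin n)} {p : Fin (n + 1)}
    (h : ¬ HasInversionBelow τ p) {q : ℕ} (hq : q ≤ n + 1) :
    HasInversionBelow (snocPerm τ p) q ↔ (p : ℕ) + 1 < q := by
  constructor
  · rintro ⟨a, b, hab, hba, haq⟩
    obtain ⟨a, rfl⟩ := Fin.exists_castSucc_eq.2 (hab.trans_le (Fin.le_last b)).ne
    rw [snocPerm_castSucc, val_succAbove] at haq
    rcases Fin.eq_castSucc_or_eq_last b with ⟨b, rfl⟩ | rfl
    · rw [snocPerm_lt_iff] at hba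
      have hpa : ¬ (τ a : ℕ) < p := fun hap => h ⟨a, b, hab, hba, hap⟩
      rw [if_neg hpa] at haq
      omega
    · rw [snocPerm_last, snocPerm_castSucc, Fin.lt_def, val_succAbove] at hba
      split_ifs at hba haq <;> omega
  · intro hpq
    have hpn : (p : ℕ) < n := by omega
    refine ⟨(τ.symm ⟨p, hpn⟩).castSucc, Fin.last n, Fin.castSucc_lt_last _, ?_, ?_⟩
    · rw [snocPerm_last, snocPerm_castSucc, Fin.lt_def, val_succAbove]
      simp
    · rw [snocPerm_castSucc, val_succAbove]
      simpa using hpq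

open Classical in
/-- The largest `p ≤ n` such that `τ` has no inversion whose larger entry is below `p`. -/
noncomputable def inversionFloor (τ : Equiv.Perm (Fin n)) : ℕ :=
  Nat.findGreatest (fun p => ¬ HasInversionBelow τ p) n

lemma inversionFloor_le (τ : Equiv.Perm (Fin n)) : inversionFloor τ ≤ n := by
  classical exact Nat.findGreatest_le n

lemma hasInversionBelow_iff (τ : Equiv.Perm (Fin n)) {p : ℕ} (hp : p ≤ n) :
    HasInversionBelow τ p ↔ inversionFloor τ < p := by
  classical
  refine ⟨fun h => ?_, fun hlt => not_not.1 (Nat.findGreatest_is_greatest hlt hp)⟩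
  have hfloor : ¬ HasInversionBelow τ (inversionFloor τ) :=
    Nat.findGreatest_spec (P := fun p => ¬ HasInversionBelow τ p) n.zero_le
      fun ⟨_, _, _, _, h⟩ => Nat.not_lt_zero _ h
  by_contra! hle
  exact hfloor (h.mono hle)

lemma inversionFloor_snocPerm {τ : Equiv.Perm (Fin n)} {p : Fin (n + 1)}
    (h : ¬ HasInversionBelow τ p) : inversionFloor (snocPerm τ p) = p + 1 := by
  have hfloor {q : ℕ} (hq : q ≤ n + 1) : inversionFloor (snocPerm τ p) < q ↔ (p : ℕ) + 1 < q := by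
    rw [← hasInversionBelow_iff _ hq, hasInversionBelow_snocPerm h hq]
  refine le_antisymm (not_lt.1 fun hlt => ?_) (not_lt.1 fun hlt => ?_)
  · exact lt_irrefl _ ((hfloor (inversionFloor_le _)).2 hlt)
  · exact lt_irrefl _ ((hfloor p.2).1 hlt)

lemma increasingFrom_snocPerm (hk : k ≤ n) (τ : Equiv.Perm (Fin (n + 1))) (p : Fin (n + 2)) :
    IncreasingFrom (snocPerm τ p) k ↔ IncreasingFrom τ k ∧ (τ (Fin.last n) : ℕ) < p := by
  constructor
  · intro h
    refine ⟨fun i j hi hij => (snocPerm_lt_iff ..).1 (h i.castSucc j.castSucc hi hij), ?_⟩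
    have hlast := h (Fin.last n).castSucc (Fin.last (n + 1)) hk (Fin.castSucc_lt_last _)
    rwa [snocPerm_last, snocPerm_castSucc, succAbove_lt_self_iff] at hlast
  · rintro ⟨h, hp⟩ i j hi hij
    obtain ⟨i, rfl⟩ := Fin.exists_castSucc_eq.2 (hij.trans_le (Fin.le_last j)).ne
    rcases Fin.eq_castSucc_or_eq_last j with ⟨j, rfl⟩ | rfl
    · exact (snocPerm_lt_iff ..).2 (h i j hi hij)
    · rw [snocPerm_last, snocPerm_castSucc, succAbove_lt_self_iff]
      rcases (Fin.le_last i).eq_or_lt with rfl | hlt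
      · exact hp
      · exact (Fin.lt_def.1 (h i _ hi hlt)).trans hp

lemma hasTop_zero_iff (τ : Equiv.Perm (Fin n)) : HasTop τ 0 ↔ ¬ Has213Below τ n :=
  ⟨fun h => h.2.1, fun h => ⟨n.zero_le, h, fun i _ hi => absurd i.2 hi.not_gt,
    fun h0 => absurd h0 (lt_irrefl 0)⟩⟩

lemma hasTop_zero_snocPerm (τ : Equiv.Perm (Fin n)) (p : Fin (n + 1)) :
    HasTop (snocPerm τ p) 0 ↔ HasTop τ 0 ∧ (p : ℕ) ≤ inversionFloor τ := by
  rw [hasTop_zero_iff, hasTop_zero_iff, has213Below_snocPerm_succ,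
    hasInversionBelow_iff τ (Fin.is_le p), not_or, not_lt]

lemma hasTop_one_snocPerm (τ : Equiv.Perm (Fin n)) (p : Fin (n + 1)) :
    HasTop (snocPerm τ p) 1 ↔ HasTop τ 0 ∧ inversionFloor τ < p := by
  rw [hasTop_zero_iff, ← hasInversionBelow_iff τ (Fin.is_le p), HasTop, Nat.add_sub_cancel,
    has213Below_snocPerm le_rfl, has213Below_snocPerm_succ]
  constructor
  · rintro ⟨-, h_avoid, -, h_occur⟩
    exact ⟨h_avoid, (h_occur one_pos).resolve_left h_avoid⟩
  · rintro ⟨h_avoid, h_inv⟩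
    refine ⟨Nat.le_add_left 1 n, h_avoid, fun i j hi hij => ?_, fun _ => .inr h_inv⟩
    rw [Fin.lt_def] at hij
    omega

lemma hasTop_succ_snocPerm {t : ℕ} (τ : Equiv.Perm (Fin (n + 1))) (p : Fin (n + 2)) :
    HasTop (snocPerm τ p) (t + 2) ↔ HasTop τ (t + 1) ∧ (τ (Fin.last n) : ℕ) < p := by
  simp only [HasTop, show n + 1 + 1 - (t + 2) = n - t by omega, Nat.add_sub_add_right,
    has213Below_snocPerm (show n - t ≤ n + 1 by omega),
    has213Below_snocPerm (show n - t + 1 ≤ n + 1 by omega), increasingFrom_snocPerm (n.sub_le t),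
    Nat.succ_pos, forall_const, show t + 2 ≤ n + 1 + 1 ↔ t + 1 ≤ n + 1 by omega]
  tauto

end SnocPerm

section Counting

open scoped Finset

open Classical in
/-- The number of 213-avoiding permutations of length `m` with `inversionFloor` equal to `r`. -/
noncomputable def floorCount (m r : ℕ) : ℕ :=
  #{τ : Equiv.Perm (Fin m) | HasTop τ 0 ∧ inversionFloor τ = r}

open Classical in
/-- The number of permutations `τ` of length `n + 1` with `HasTop τ (t + 1)` and last entry `v`. -/
noncomputable def lastCount (n t v : ℕ) : ℕ :=
  #{τ : Equiv.Perm (Fin (n + 1)) | HasTop τ (t + 1) ∧ (τ (Fin.last n) : ℕ) = v}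

lemma card_filter_perm_succ {n : ℕ} (P : Equiv.Perm (Fin (n + 1)) → Prop) [DecidablePred P] :
    #{τ | P τ} = ∑ p : Fin (n + 1), #{τ | P (snocPerm τ p)} := by
  simp only [Finset.card_filter]
  rw [← (snocPerm_bijective n).sum_comp fun τ => if P τ then 1 else 0,
    Fintype.sum_prod_type_right]

lemma card_filter_perm_succ_eq {n v w : ℕ} (hv : v < n + 1) (P : Equiv.Perm (Fin (n + 1)) → Prop)
    [DecidablePred P] (f : Equiv.Perm (Fin (n + 1)) → ℕ)
    (hf : ∀ τ p, P (snocPerm τ p) → (f (snocPerm τ p) = w ↔ (p : ℕ) = v)) :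
    #{τ | P τ ∧ f τ = w} = #{τ | P (snocPerm τ ⟨v, hv⟩)} := by
  rw [card_filter_perm_succ, Finset.sum_eq_single ⟨v, hv⟩]
  · congr! 2 with τ
    exact and_iff_left_of_imp fun h => (hf _ _ h).2 rfl
  · intro p _ hp
    rw [Finset.card_eq_zero, Finset.filter_eq_empty_iff]
    rintro τ - ⟨hP, hw⟩
    exact hp (Fin.ext ((hf _ _ hP).1 hw))
  · exact fun h => absurd (Finset.mem_univ _) h

lemma card_filter_eq_sum_fiber {α : Type*} [Fintype α] (P : α → Prop) [DecidablePred P]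
    (f : α → ℕ) (s : Finset ℕ) : #{a | P a ∧ f a ∈ s} = ∑ r ∈ s, #{a | P a ∧ f a = r} := by
  rw [Finset.card_eq_sum_card_fiberwise (f := f) (t := s) fun a ha => (Finset.mem_filter.1 ha).2.2]
  refine Finset.sum_congr rfl fun r hr => ?_
  rw [Finset.filter_filter]
  congr! 2 with a
  constructor
  · rintro ⟨⟨hP, -⟩, rfl⟩
    exact ⟨hP, rfl⟩
  · rintro ⟨hP, rfl⟩
    exact ⟨⟨hP, hr⟩, rfl⟩

lemma inversionFloor_of_hasTop_zero_snocPerm {n : ℕ} {τ : Equiv.Perm (Fin n)} {p : Fin (n + 1)}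
    (h : HasTop (snocPerm τ p) 0) : inversionFloor (snocPerm τ p) = p + 1 := by
  rw [hasTop_zero_snocPerm, ← not_lt, ← hasInversionBelow_iff _ (Fin.is_le p)] at h
  exact inversionFloor_snocPerm h.2

lemma floorCount_succ_succ {m j : ℕ} (hj : j ≤ m) :
    floorCount (m + 1) (j + 1) = ∑ r ∈ Finset.Icc j m, floorCount m r := by
  classical
  simp only [floorCount]
  rw [card_filter_perm_succ_eq (Nat.lt_succ_of_le hj), ← card_filter_eq_sum_fiber]
  · simp only [hasTop_zero_snocPerm, Finset.mem_Icc, inversionFloor_le, and_true]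
  · intro τ p hp
    rw [inversionFloor_of_hasTop_zero_snocPerm hp, Nat.add_right_cancel_iff]

lemma floorCount_succ_zero (m : ℕ) : floorCount (m + 1) 0 = 0 := by
  classical
  rw [floorCount, card_filter_perm_succ]
  refine Finset.sum_eq_zero fun p _ => ?_
  rw [Finset.card_eq_zero, Finset.filter_eq_empty_iff]
  rintro τ - ⟨h_top, h_floor⟩
  rw [inversionFloor_of_hasTop_zero_snocPerm h_top] at h_floor
  exact absurd h_floor (Nat.succ_ne_zero _)

lemma floorCount_eq_zero_of_lt {m r : ℕ} (h : m < r) : floorCount m r = 0 := by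
  classical
  rw [floorCount, Finset.card_eq_zero, Finset.filter_eq_empty_iff]
  rintro τ - ⟨-, rfl⟩
  exact h.not_ge (inversionFloor_le τ)

lemma floorCount_zero_zero : floorCount 0 0 = 1 := by
  classical
  have h (τ : Equiv.Perm (Fin 0)) : HasTop τ 0 ∧ inversionFloor τ = 0 :=
    ⟨(hasTop_zero_iff τ).2 fun ⟨a, _⟩ => a.elim0, Nat.le_zero.1 (inversionFloor_le τ)⟩
  simp [floorCount, h]

lemma floorCount_succ_succ_eq_add {m j : ℕ} (hj : j ≤ m) :
    floorCount (m + 1) (j + 1) = floorCount m j + floorCount (m + 1) (j + 2) := by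
  rcases hj.eq_or_lt with rfl | hlt
  · rw [floorCount_succ_succ le_rfl, floorCount_eq_zero_of_lt (Nat.lt_succ_self _),
      Finset.Icc_self, Finset.sum_singleton, add_zero]
  · rw [floorCount_succ_succ hj, floorCount_succ_succ hlt, ← Finset.Ioc_insert_left hj,
      Finset.sum_insert Finset.left_notMem_Ioc, ← Finset.Icc_succ_left_eq_Ioc, Nat.succ_eq_succ]

lemma lastCount_zero {n v : ℕ} (hv : v < n + 1) :
    lastCount n 0 v = ∑ r ∈ Finset.range v, floorCount n r := by
  classical
  simp only [lastCount, floorCount, zero_add]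
  rw [card_filter_perm_succ_eq hv _ _ fun τ p _ => by rw [snocPerm_last],
    ← card_filter_eq_sum_fiber]
  simp only [hasTop_one_snocPerm, Finset.mem_range]

lemma lastCount_succ {n t v : ℕ} (hv : v < n + 2) :
    lastCount (n + 1) (t + 1) v = ∑ r ∈ Finset.range v, lastCount n t r := by
  classical
  simp only [lastCount]
  rw [card_filter_perm_succ_eq hv _ _ fun τ p _ => by rw [snocPerm_last],
    ← card_filter_eq_sum_fiber]
  simp only [hasTop_succ_snocPerm, Finset.mem_range]

lemma sum_range_sum_choose (a : ℕ → ℕ) (t w : ℕ) :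
    ∑ v ∈ Finset.range w, ∑ r ∈ Finset.range v, a r * (v - 1 - r).choose t =
      ∑ r ∈ Finset.range w, a r * (w - 1 - r).choose (t + 1) := by
  induction w with
  | zero => rfl
  | succ w ih =>
    rw [Finset.sum_range_succ, ih, Finset.sum_range_succ, ← Finset.sum_add_distrib,
      Nat.add_sub_cancel, Nat.sub_self, Nat.choose_zero_succ, mul_zero, add_zero]
    refine Finset.sum_congr rfl fun r hr => ?_
    obtain ⟨d, rfl⟩ := Nat.exists_eq_add_of_lt (Finset.mem_range.1 hr)
    rw [show r + d + 1 - 1 - r = d by omega, show r + d + 1 - r = d + 1 by omega,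
      Nat.choose_succ_succ]
    ring

lemma lastCount_eq_sum (m t : ℕ) {v : ℕ} (hv : v < m + t + 1) :
    lastCount (m + t) t v = ∑ r ∈ Finset.range v, floorCount m r * (v - 1 - r).choose t := by
  induction t generalizing v with
  | zero =>
    simp only [Nat.choose_zero_right, mul_one]
    exact lastCount_zero hv
  | succ t ih =>
    rw [← add_assoc, lastCount_succ (n := m + t) hv, ← sum_range_sum_choose]
    exact Finset.sum_congr rfl fun r hr => ih (by have := Finset.mem_range.1 hr; omega)

open Classical in
lemma card_hasTop {n t : ℕ} (hn : 0 < n) (ht : t ≤ n) :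
    #{τ : Equiv.Perm (Fin n) | HasTop τ t} =
      ∑ r ∈ Finset.range (n + 1), floorCount (n - t) r * (n - 1 - r).choose t := by
  rcases t with _ | t
  · simp only [Nat.sub_zero, Nat.choose_zero_right, mul_one, floorCount]
    rw [← card_filter_eq_sum_fiber]
    simp only [Finset.mem_range, Nat.lt_succ_of_le (inversionFloor_le _), and_true]
  · obtain ⟨m, rfl⟩ := Nat.exists_eq_add_of_le' ht
    have h := sum_range_sum_choose (floorCount m) t (m + t + 1)
    rw [← add_assoc, Finset.sum_range_succ, show m + t + 1 - (t + 1) = m by omega, ← h,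
      Nat.choose_eq_zero_of_lt (by omega), mul_zero, add_zero]
    calc #{τ : Equiv.Perm (Fin (m + t + 1)) | HasTop τ (t + 1)}
        = ∑ v ∈ Finset.range (m + t + 1), lastCount (m + t) t v := by
          simp only [lastCount]
          rw [← card_filter_eq_sum_fiber]
          simp only [Finset.mem_range, Fin.is_lt, and_true]
      _ = _ := Finset.sum_congr rfl fun v hv => lastCount_eq_sum m t (Finset.mem_range.1 hv)

end Counting

section BallotNumbers

lemma floorCount_self (m : ℕ) : floorCount m m = 1 := by
  induction m with
  | zero => exact floorCount_zero_zero
  | succ m ih =>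
    rw [floorCount_succ_succ_eq_add le_rfl, ih, floorCount_eq_zero_of_lt (by omega)]

lemma floorCount_add_choose (k r : ℕ) :
    floorCount (k + 1 + r) r + (2 * k + r + 1).choose k = (2 * k + r + 1).choose (k + 1) := by
  induction k generalizing r with
  | zero =>
    induction r with
    | zero => simp [floorCount_succ_zero 0]
    | succ r ih =>
      have hrec := floorCount_succ_succ_eq_add (show r ≤ 0 + 1 + r by omega)
      rw [show 0 + 1 + r + 1 = r + 2 by omega, floorCount_self] at hrec
      rw [show 0 + 1 + (r + 1) = r + 2 by omega, hrec]
      simp only [mul_zero, zero_add, Nat.choose_zero_right, Nat.choose_one_right] at ih ⊢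
      omega
  | succ k ihk =>
    induction r with
    | zero =>
      rw [add_zero, floorCount_succ_zero, zero_add, add_zero, Nat.choose_symm_half]
    | succ r ihr =>
      have hrec := floorCount_succ_succ_eq_add (show r ≤ k + 1 + 1 + r by omega)
      have hk := ihk (r + 2)
      rw [show k + 1 + (r + 2) = k + 1 + 1 + r + 1 by omega,
        show 2 * k + (r + 2) + 1 = 2 * (k + 1) + r + 1 by omega] at hk
      rw [show k + 1 + 1 + (r + 1) = k + 1 + 1 + r + 1 by omega, hrec,
        show 2 * (k + 1) + (r + 1) + 1 = 2 * (k + 1) + r + 1 + 1 by omega,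
        Nat.choose_succ_succ', Nat.choose_succ_succ' _ (k + 1)]
      omega

lemma floorCount_mul (k j : ℕ) :
    floorCount (k + j + 1) (j + 1) * (k + j + 1) = (j + 1) * (2 * k + j).choose k := by
  rcases k with _ | k
  · simp [floorCount_self]
  · have hreflect := floorCount_add_choose k (j + 1)
    have hchoose := Nat.choose_succ_right_eq (2 * (k + 1) + j) k
    rw [show 2 * (k + 1) + j - k = k + j + 2 by omega] at hchoose
    rw [show k + 1 + (j + 1) = k + 1 + j + 1 by omega,
      show 2 * k + (j + 1) + 1 = 2 * (k + 1) + j by omega] at hreflect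
    zify at hreflect hchoose ⊢
    linear_combination (k + j + 2 : ℤ) * hreflect + hchoose

end BallotNumbers

section ExactCount

open scoped Finset

open Classical in
lemma card_avoidsH_topPts_mem (n : ℕ) (A : Set ℕ) :
    Nat.card {σ : Equiv.Perm (Fin n) // AvoidsH σ ∧ topPts σ ∈ A} =
      ∑ t ∈ Finset.Iic n, if t ∈ A then #{τ : Equiv.Perm (Fin n) | HasTop τ t} else 0 := by
  have hmem (σ : Equiv.Perm (Fin n)) : topPts σ ∈ A ↔ topPts σ ∈ {t ∈ Finset.Iic n | t ∈ A} := by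
    rw [Finset.mem_filter, Finset.mem_Iic, and_iff_right (show topPts σ ≤ n from Nat.sub_le ..)]
  rw [Nat.card_eq_fintype_card, Fintype.card_subtype, ← Finset.sum_filter]
  simp only [hmem, card_filter_eq_sum_fiber, avoidsH_and_topPts_iff]
  exact Finset.sum_congr rfl fun t _ =>
    Finset.card_bijective Equiv.symm Equiv.symm_bijective (by simp)

lemma sum_floorCount_mul_choose {n t : ℕ} (hn : 0 < n) (ht : t ≤ n) :
    ∑ r ∈ Finset.range (n + 1), floorCount (n - t) r * (n - 1 - r).choose t =
      (if t = 0 then 1 else 0) +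
        ∑ j ∈ Finset.range (n - 1), floorCount (n - t) (j + 1) * (n - j - 2).choose t := by
  obtain ⟨N, rfl⟩ := Nat.exists_eq_add_one.2 hn
  have hzero : floorCount (N + 1 - t) 0 * N.choose t = 0 := by
    rcases ht.eq_or_lt with rfl | hlt
    · rw [Nat.choose_succ_self, mul_zero]
    · rw [Nat.sub_add_comm (Nat.le_of_lt_succ hlt), floorCount_succ_zero, zero_mul]
  have hlast : floorCount (N + 1 - t) (N + 1) * (N - (N + 1)).choose t =
      if t = 0 then 1 else 0 := by
    split_ifs with h
    · rw [h, Nat.sub_zero, floorCount_self, Nat.choose_zero_right]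
    · rw [floorCount_eq_zero_of_lt (by omega), zero_mul]
  have hsub (j : ℕ) : N + 1 - j - 2 = N - (j + 1) := by omega
  simp only [hsub]
  rw [Finset.sum_range_succ, Finset.sum_range_succ', Nat.add_sub_cancel, Nat.sub_zero, hzero,
    hlast, add_zero, add_comm]

open Classical in
lemma card_avoidsH_topPts_mem_eq_sum {n : ℕ} (hn : 0 < n) (A : Set ℕ) :
    Nat.card {σ : Equiv.Perm (Fin n) // AvoidsH σ ∧ topPts σ ∈ A} =
      (if 0 ∈ A then 1 else 0) + ∑ j ∈ Finset.range (n - 1), ∑ t ∈ Finset.Iic (n - j),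
        if t ∈ A then floorCount (n - t) (j + 1) * (n - j - 2).choose t else 0 := by
  have hterm (t : ℕ) (ht : t ∈ Finset.Iic n) :
      (if t ∈ A then #{τ : Equiv.Perm (Fin n) | HasTop τ t} else 0) =
        (if t = 0 then if 0 ∈ A then 1 else 0 else 0) + ∑ j ∈ Finset.range (n - 1),
          if t ∈ A then floorCount (n - t) (j + 1) * (n - j - 2).choose t else 0 := by
    rw [Finset.mem_Iic] at ht
    rw [card_hasTop hn ht, sum_floorCount_mul_choose hn ht]
    split_ifs with hA h0 <;> simp_all
  rw [card_avoidsH_topPts_mem, Finset.sum_congr rfl hterm, Finset.sum_add_distrib,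
    Finset.sum_ite_eq' , if_pos (Finset.mem_Iic.2 n.zero_le), Finset.sum_comm]
  congr 1
  refine Finset.sum_congr rfl fun j hj => ?_
  rw [Finset.mem_range] at hj
  refine (Finset.sum_subset (Finset.Iic_subset_Iic.2 (n.sub_le j)) fun t _ ht => ?_).symm
  rw [Finset.mem_Iic] at ht
  rw [Nat.choose_eq_zero_of_lt (by omega), mul_zero, ite_self]

end ExactCount

section CentralBinomial

lemma centralBinom_mul_sqrt_le (k : ℕ) : (k.centralBinom : ℝ) * √(k + 1) ≤ 4 ^ k := by
  induction k with
  | zero => simp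
  | succ k ih =>
    have hrec : ((k : ℝ) + 1) * (k + 1).centralBinom = 2 * (2 * k + 1) * k.centralBinom := by
      exact_mod_cast Nat.succ_mul_centralBinom_succ k
    have hsqrt : (2 * (k : ℝ) + 1) * √(k + 1 + 1) ≤ 2 * (k + 1) * √(k + 1) := by
      refine le_of_sq_le_sq ?_ (by positivity)
      rw [mul_pow, mul_pow, Real.sq_sqrt (by positivity), Real.sq_sqrt (by positivity)]
      nlinarith [(Nat.cast_nonneg k : (0 : ℝ) ≤ k)]
    rw [← mul_le_mul_iff_right₀ (show (0 : ℝ) < k + 1 by positivity)]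
    push_cast
    calc ((k : ℝ) + 1) * ((k + 1).centralBinom * √(k + 1 + 1))
        = 2 * k.centralBinom * ((2 * k + 1) * √(k + 1 + 1)) := by
          linear_combination √(k + 1 + 1) * hrec
      _ ≤ 2 * k.centralBinom * (2 * (k + 1) * √(k + 1)) := by gcongr
      _ = 4 * (k + 1) * (k.centralBinom * √(k + 1)) := by ring
      _ ≤ 4 * (k + 1) * 4 ^ k := by gcongr
      _ = (k + 1) * 4 ^ (k + 1) := by ring

lemma centralBinom_eq_stirlingSeq {k : ℕ} (hk : 0 < k) :
    (k.centralBinom : ℝ) * √k / 4 ^ k =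
      Stirling.stirlingSeq (2 * k) / Stirling.stirlingSeq k ^ 2 := by
  have hsqrt : √(2 * (2 * k : ℕ) : ℝ) = 2 * √k := by
    rw [show (2 * (2 * k : ℕ) : ℝ) = 2 ^ 2 * k by push_cast; ring, Real.sqrt_mul (by norm_num),
      Real.sqrt_sq zero_le_two]
  have hsqrt_sq : √(2 * k : ℝ) ^ 2 = 2 * √k ^ 2 := by
    rw [Real.sq_sqrt (by positivity), Real.sq_sqrt (by positivity)]
  have hcentral : (k.centralBinom : ℝ) = (2 * k).factorial / (k.factorial * k.factorial) := by
    rw [Nat.centralBinom, Nat.cast_choose ℝ (by omega), show 2 * k - k = k by omega]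
  have hpow : ((2 * k : ℕ) / Real.exp 1) ^ (2 * k) = 4 ^ k * ((k / Real.exp 1) ^ k) ^ 2 := by
    rw [Nat.cast_mul, Nat.cast_ofNat, mul_div_assoc, mul_pow, pow_mul, pow_mul' _ 2 k]
    norm_num
  have : 0 < √(k : ℝ) := by positivity
  have hsq : Stirling.stirlingSeq k ^ 2 =
      k.factorial ^ 2 / (2 * √k ^ 2 * ((k / Real.exp 1) ^ k) ^ 2) := by
    rw [Stirling.stirlingSeq, div_pow, mul_pow, hsqrt_sq]
  rw [hsq, Stirling.stirlingSeq, hsqrt, hcentral, hpow]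
  field_simp

lemma tendsto_centralBinom :
    Tendsto (fun k : ℕ => (k.centralBinom : ℝ) * √(k + 1) / 4 ^ k) atTop (𝓝 (√Real.pi)⁻¹) := by
  have hpi : √Real.pi ≠ 0 := (Real.sqrt_pos.2 Real.pi_pos).ne'
  have hstirling := Stirling.tendsto_stirlingSeq_sqrt_pi
  have hquot := (hstirling.comp (tendsto_id.const_mul_atTop' (zero_lt_two' ℕ))).div
    (hstirling.pow 2) (pow_ne_zero 2 hpi)
  have hsucc : Tendsto (fun k : ℕ => √((k + 1) / k : ℝ)) atTop (𝓝 1) := by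
    simpa [add_comm] using
      (tendsto_add_mul_div_add_mul_atTop_nhds (1 : ℝ) 0 1 one_ne_zero).sqrt
  have h := hquot.mul hsucc
  rw [show √Real.pi / √Real.pi ^ 2 * 1 = (√Real.pi)⁻¹ by field_simp] at h
  refine h.congr' ?_
  filter_upwards [eventually_gt_atTop 0] with k hk
  have : 0 < √(k : ℝ) := by positivity
  simp only [Pi.div_apply, Function.comp_apply, id_eq]
  rw [← centralBinom_eq_stirlingSeq hk, Real.sqrt_div (by positivity)]
  field_simp

lemma choose_two_mul_add_succ (k j : ℕ) :
    ((2 * k + (j + 1)).choose k : ℝ) =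
      (2 * k + j).choose k * ((2 * k + j + 1) / (k + j + 1)) := by
  have h := Nat.choose_mul_succ_eq (2 * k + j) k
  rw [show 2 * k + j + 1 - k = k + j + 1 by omega] at h
  rw [mul_div_assoc', eq_div_iff (by positivity)]
  exact_mod_cast h.symm

lemma choose_two_mul_add_mul_sqrt_le (k j : ℕ) :
    ((2 * k + j).choose k : ℝ) * √(k + 1) ≤ 2 ^ j * 4 ^ k := by
  induction j with
  | zero => simpa [Nat.centralBinom] using centralBinom_mul_sqrt_le k
  | succ j ih =>
    have hratio : (2 * k + j + 1) / (k + j + 1) ≤ (2 : ℝ) := by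
      rw [div_le_iff₀ (by positivity)]
      linarith [(Nat.cast_nonneg j : (0 : ℝ) ≤ j)]
    rw [choose_two_mul_add_succ, mul_right_comm]
    exact (mul_le_mul ih hratio (by positivity) (by positivity)).trans_eq (by ring)

lemma tendsto_choose_two_mul_add (j : ℕ) :
    Tendsto (fun k : ℕ => ((2 * k + j).choose k : ℝ) * √(k + 1) / 4 ^ k) atTop
      (𝓝 (2 ^ j / √Real.pi)) := by
  induction j with
  | zero => simpa [Nat.centralBinom] using tendsto_centralBinom
  | succ j ih =>
    have hratio : Tendsto (fun k : ℕ => (2 * (k : ℝ) + j + 1) / (k + j + 1)) atTop (𝓝 2) := by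
      have := tendsto_add_mul_div_add_mul_atTop_nhds ((j : ℝ) + 1) (j + 1) 2 one_ne_zero
      simpa [add_comm, add_left_comm, add_assoc] using this
    have h := ih.mul hratio
    rw [show 2 ^ j / √Real.pi * 2 = 2 ^ (j + 1) / √Real.pi by ring] at h
    refine h.congr fun k => ?_
    rw [choose_two_mul_add_succ]
    ring

end CentralBinomial

section BallotWeight

/-- The ballot numbers `floorCount (u + j) (j + 1)`, normalized by their exponential growth and
multiplied by `u (u - 1)`, the factor absorbed by a binomial coefficient in
`choose_sub_two_mul`. -/
noncomputable def ballotWeight (j u : ℕ) : ℝ :=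
  u * (u - 1) * floorCount (u + j) (j + 1) / 4 ^ u

lemma ballotWeight_zero (j : ℕ) : ballotWeight j 0 = 0 := by
  simp [ballotWeight]

lemma ballotWeight_succ (j k : ℕ) :
    ballotWeight j (k + 1) =
      (j + 1) * (k + 1) * (k / (k + j + 1)) * ((2 * k + j).choose k / 4 ^ k) / 4 := by
  have h : (floorCount (k + j + 1) (j + 1) : ℝ) * (k + j + 1) = (j + 1) * (2 * k + j).choose k := by
    exact_mod_cast floorCount_mul k j
  rw [ballotWeight, show k + 1 + j = k + j + 1 by omega, eq_div_of_mul_eq (by positivity) h]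
  push_cast
  field_simp
  ring

lemma abs_ballotWeight_div_sqrt_le (j u : ℕ) : |ballotWeight j u / √u| ≤ (j + 1) * 2 ^ j := by
  rcases u with _ | k
  · rw [ballotWeight_zero, zero_div, abs_zero]
    positivity
  have hratio : (k : ℝ) / (k + j + 1) ≤ 1 :=
    div_le_one_of_le₀ (by linarith [(Nat.cast_nonneg j : (0 : ℝ) ≤ j)]) (by positivity)
  have hchoose : ((2 * k + j).choose k : ℝ) * √(k + 1) / 4 ^ k ≤ 2 ^ j :=
    div_le_of_le_mul₀ (by positivity) (by positivity) (choose_two_mul_add_mul_sqrt_le k j)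
  have hsqrt : ((k : ℝ) + 1) / √(k + 1) = √(k + 1) := Real.div_sqrt
  rw [ballotWeight_succ, Nat.cast_succ, abs_of_nonneg (by positivity)]
  calc (j + 1) * (k + 1) * (k / (k + j + 1)) * ((2 * k + j).choose k / 4 ^ k) / 4 / √((k : ℝ) + 1)
      = (j + 1) * (k / (k + j + 1)) *
          ((2 * k + j).choose k * ((k + 1) / √(k + 1)) / 4 ^ k) / 4 := by ring
    _ ≤ (j + 1) * 1 * 2 ^ j / 1 := by rw [hsqrt]; gcongr; norm_num
    _ = (j + 1) * 2 ^ j := by ring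

lemma tendsto_ballotWeight_div_sqrt (j : ℕ) :
    Tendsto (fun u : ℕ => ballotWeight j u / √u) atTop
      (𝓝 ((j + 1) * 2 ^ j / (4 * √Real.pi))) := by
  rw [← tendsto_add_atTop_iff_nat 1]
  have hratio : Tendsto (fun k : ℕ => (k : ℝ) / (k + j + 1)) atTop (𝓝 1) := by
    simpa [add_assoc] using tendsto_natCast_div_add_atTop ((j : ℝ) + 1)
  have h := ((hratio.mul (tendsto_choose_two_mul_add j)).const_mul ((j : ℝ) + 1)).div_const 4
  rw [show ((j : ℝ) + 1) * (1 * (2 ^ j / √Real.pi)) / 4 = (j + 1) * 2 ^ j / (4 * √Real.pi) by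
    field_simp] at h
  refine h.congr fun k => ?_
  have hsqrt : ((k : ℝ) + 1) / √(k + 1) = √(k + 1) := Real.div_sqrt
  rw [ballotWeight_succ, Nat.cast_succ]
  linear_combination (-(j + 1) * (k / (k + j + 1)) * ((2 * k + j).choose k / 4 ^ k) / 4) * hsqrt

end BallotWeight

section Binomial

open MeasureTheory ProbabilityTheory unitInterval

lemma gaussianReal_real_Iic (x : ℝ) :
    (gaussianReal 0 1).real (Set.Iic x) =
      (1 / √(2 * Real.pi)) * ∫ t in Set.Iic x, Real.exp (-t ^ 2 / 2) := by
  rw [measureReal_def, gaussianReal_apply_eq_integral 0 one_ne_zero, ENNReal.toReal_ofReal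
    (integral_nonneg fun t => gaussianPDFReal_nonneg 0 1 t), ← integral_const_mul]
  simp [gaussianPDFReal]

lemma bernoulliMeasure_conv_binomial (n : ℕ) (p : I) :
    Ber(1, 0, p) ∗ Bin(n, p) = Bin(n + 1, p) := by
  have hconv : Ber(1, 0, p) ∗ Bin(n, p) =
      toNNReal p • Bin(n, p).map (1 + ·) + toNNReal (σ p) • Bin(n, p) := by
    rw [bernoulliMeasure_def, Measure.add_conv]
    simp only [← Measure.coe_nnreal_smul, Measure.conv_smul_left, Measure.dirac_conv, zero_add,
      Measure.map_id']
  refine Measure.ext_of_measureReal_singleton fun k => ?_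
  rw [hconv, measureReal_add_apply, measureReal_nnreal_smul_apply, measureReal_nnreal_smul_apply,
    map_measureReal_apply .of_discrete .of_discrete]
  simp only [binomial_real_singleton, coe_toNNReal, coe_symm_eq]
  rcases k with _ | k
  · have hpre : (1 + · : ℕ → ℕ) ⁻¹' {0} = ∅ := by ext; simp
    rw [hpre, measureReal_empty]
    simp only [Nat.choose_zero_right, Nat.sub_zero]
    ring
  · have hpre : (1 + · : ℕ → ℕ) ⁻¹' {k + 1} = {k} := by ext; simp [add_comm 1]
    have hpow : (n.choose (k + 1) : ℝ) * (1 - p : ℝ) ^ (n - k) =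
        n.choose (k + 1) * (1 - p : ℝ) ^ (n - (k + 1)) * (1 - p) := by
      rcases lt_or_ge k n with hk | hk
      · rw [mul_assoc, ← pow_succ, show n - (k + 1) + 1 = n - k by omega]
      · simp [Nat.choose_eq_zero_of_lt (show n < k + 1 by omega)]
    rw [hpre, binomial_real_singleton, Nat.choose_succ_succ, Nat.add_sub_add_right]
    push_cast
    linear_combination (-(p : ℝ) ^ (k + 1)) * hpow

variable {Ω : Type*} [MeasurableSpace Ω] {P : Measure Ω}

lemma tendsto_setIntegral_of_ae_tendsto_const [IsFiniteMeasure P] {G : ℕ → Ω → ℝ}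
    {A : ℕ → Set Ω} {C c L : ℝ}
    (hmeas : ∀ n, AEStronglyMeasurable (G n) P) (hbound : ∀ n ω, |G n ω| ≤ C)
    (hG : ∀ᵐ ω ∂P, Tendsto (fun n => G n ω) atTop (𝓝 c))
    (hA : Tendsto (fun n => P.real (A n)) atTop (𝓝 L)) :
    Tendsto (fun n => ∫ ω in A n, G n ω ∂P) atTop (𝓝 (c * L)) := by
  have hint n : Integrable (G n) P := .of_bound (hmeas n) C (.of_forall (hbound n))
  have hL1 : Tendsto (fun n => ∫ ω, |G n ω - c| ∂P) atTop (𝓝 0) := by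
    rw [← integral_zero Ω ℝ]
    refine tendsto_integral_of_dominated_convergence (fun _ => C + |c|)
      (fun n => ((hint n).sub (integrable_const c)).abs.aestronglyMeasurable)
      (integrable_const _) (fun n => .of_forall fun ω => ?_) ?_
    · rw [Real.norm_eq_abs, abs_abs]
      exact (abs_sub _ _).trans (by gcongr; exact hbound n ω)
    · filter_upwards [hG] with ω hω
      simpa using (hω.sub_const c).abs
  have hdiff : Tendsto (fun n => ∫ ω in A n, (G n ω - c) ∂P) atTop (𝓝 0) :=
    squeeze_zero_norm (fun n => (norm_integral_le_integral_norm _).trans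
      (setIntegral_le_integral ((hint n).sub (integrable_const c)).norm
        (.of_forall fun _ => norm_nonneg _))) hL1
  have hsum := hdiff.add (hA.mul_const c)
  rw [zero_add, mul_comm] at hsum
  refine hsum.congr fun n => ?_
  rw [integral_sub (hint n).integrableOn (integrable_const c), setIntegral_const, smul_eq_mul,
    sub_add_cancel]

lemma ae_tendsto_sum_range_div {p : I} {X : ℕ → Ω → ℕ} (hX : Measurable (X 0))
    (hlaw : ∀ i, HasLaw (X i) Ber(1, 0, p) P) (hindep : iIndepFun X P) :
    ∀ᵐ ω ∂P, Tendsto (fun n : ℕ => ((∑ i ∈ Finset.range n, X i) ω : ℝ) / n) atTop (𝓝 p) := by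
  have hcast : Measurable ((↑) : ℕ → ℝ) := .of_discrete
  have hreal i : HasLaw (fun ω => (X i ω : ℝ)) (Ber(1, 0, p).map (↑)) P :=
    HasLaw.fun_comp ⟨hcast.aemeasurable, rfl⟩ (hlaw i)
  have hint : Integrable (fun ω => (X 0 ω : ℝ)) P := by
    have h := integrable_bernoulliMeasure 1 0 p ((↑) : ℕ → ℝ)
    rw [← (hlaw 0).map_eq] at h
    exact h.comp_measurable hX
  have hmean : ∫ ω, (X 0 ω : ℝ) ∂P = p := by
    simpa [integral_bernoulliMeasure] using
      (hlaw 0).integral_comp (f := ((↑) : ℕ → ℝ)) hcast.aestronglyMeasurable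
  simpa [hmean] using strong_law_ae_real (fun i ω => (X i ω : ℝ)) hint
    (fun i j hij => (hindep.indepFun hij).comp hcast hcast)
    (fun i => (hreal i).identDistrib (hreal 0))

variable [IsProbabilityMeasure P]

lemma hasLaw_binomial_sum_range {p : I} {X : ℕ → Ω → ℕ} (hX : ∀ i, Measurable (X i))
    (hlaw : ∀ i, HasLaw (X i) Ber(1, 0, p) P) (hindep : iIndepFun X P) (n : ℕ) :
    HasLaw (∑ i ∈ Finset.range n, X i) Bin(n, p) P := by
  induction n with
  | zero =>
    rw [Finset.sum_range_zero, binomial_zero]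
    exact hasLaw_dirac_of_ae_eq .rfl
  | succ n ih =>
    rw [Finset.sum_range_succ_comm, ← bernoulliMeasure_conv_binomial]
    exact (hindep.indepFun_finsetSum_of_notMem hX Finset.notMem_range_self).symm.hasLaw_add
      (hlaw n) ih

lemma tendsto_setIntegral_binomial {p : I} {G : ℕ → ℕ → ℝ} {A : ℕ → Set ℕ} {C c L : ℝ}
    (hbound : ∀ n t, |G n t| ≤ C)
    (hG : ∀ T : ℕ → ℕ, Tendsto (fun n => (T n : ℝ) / n) atTop (𝓝 p) →
      Tendsto (fun n => G n (T n)) atTop (𝓝 c))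
    (hA : Tendsto (fun n => Bin(n, p).real (A n)) atTop (𝓝 L)) :
    Tendsto (fun n => ∫ t in A n, G n t ∂Bin(n, p)) atTop (𝓝 (c * L)) := by
  obtain ⟨Ω, _, P, X, hX, hlaw, hindep, _⟩ := exists_iid ℕ Ber(1, 0, p)
  let S (n : ℕ) : Ω → ℕ := ∑ i ∈ Finset.range n, X i
  have hSmeas n : Measurable (S n) := by fun_prop
  have hmap n : Bin(n, p) = P.map (S n) := (hasLaw_binomial_sum_range hX hlaw hindep n).map_eq.symm
  simp only [hmap, map_measureReal_apply (hSmeas _) .of_discrete] at hA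
  simp only [hmap, setIntegral_map .of_discrete .of_discrete (hSmeas _).aemeasurable]
  exact tendsto_setIntegral_of_ae_tendsto_const
    (fun n => (Measurable.of_discrete.comp (hSmeas n)).aestronglyMeasurable)
    (fun n ω => hbound n _)
    ((ae_tendsto_sum_range_div (hX 0) hlaw hindep).mono fun ω => hG _) hA

lemma integral_standardized_bernoulli {p : I} (hp0 : 0 < p) (hp1 : p < 1) :
    ∫ t : ℕ, ((t : ℝ) - p) / √(p * (1 - p)) ∂Ber(1, 0, p) = 0 ∧
      ∫ t : ℕ, (((t : ℝ) - p) / √(p * (1 - p))) ^ 2 ∂Ber(1, 0, p) = 1 := by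
  have hq : 0 < (1 : ℝ) - p := sub_pos.2 (by exact_mod_cast hp1)
  have hp : (0 : ℝ) < p := by exact_mod_cast hp0
  simp only [integral_bernoulliMeasure, div_pow, Real.sq_sqrt (mul_pos hp hq).le, smul_eq_mul]
  constructor
  · push_cast; ring
  · field_simp
    push_cast; ring

lemma tendstoInDistribution_standardized_sum {p : I} (hp0 : 0 < p) (hp1 : p < 1)
    {X : ℕ → Ω → ℕ} (hlaw : ∀ i, HasLaw (X i) Ber(1, 0, p) P) (hindep : iIndepFun X P) :
    TendstoInDistribution
      (fun (n : ℕ) ω => (((∑ i ∈ Finset.range n, X i) ω : ℝ) - n * p) / √(n * (p * (1 - p))))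
      atTop id (fun _ => P) (gaussianReal 0 1) := by
  let standardize : ℕ → ℝ := fun t => (t - p) / √(p * (1 - p))
  have hmeas : Measurable standardize := .of_discrete
  have hY i : HasLaw (standardize ∘ X i) (Ber(1, 0, p).map standardize) P :=
    HasLaw.comp ⟨hmeas.aemeasurable, rfl⟩ (hlaw i)
  obtain ⟨hmean, hvar⟩ := integral_standardized_bernoulli hp0 hp1
  convert tendstoInDistribution_inv_sqrt_mul_sum (X := fun i => standardize ∘ X i) .id ?_ ?_
    (hindep.comp _ fun _ => hmeas) (fun i => (hY i).identDistrib (hY 0)) using 3 with n ω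
  · simp only [Function.comp_apply, standardize, Finset.sum_apply, Nat.cast_sum,
      ← Finset.sum_div, Finset.sum_sub_distrib, Finset.sum_const, Finset.card_range, nsmul_eq_mul,
      Real.sqrt_mul n.cast_nonneg]
    rw [inv_mul_eq_div, div_div, mul_comm (√n)]
  · rw [(hlaw 0).integral_comp hmeas.aestronglyMeasurable, hmean]
  · rw [← hvar]
    exact (hlaw 0).integral_comp (hmeas.pow_const 2).aestronglyMeasurable

lemma tendsto_measureReal_le_of_tendstoInDistribution {Ω' : Type*} [MeasurableSpace Ω']
    {P' : Measure Ω'} [IsProbabilityMeasure P'] {Z : ℕ → Ω → ℝ} {W : Ω' → ℝ}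
    (hZ : TendstoInDistribution Z atTop W (fun _ => P) P') {b : ℕ → ℝ} {x : ℝ}
    (hb : Tendsto b atTop (𝓝 x)) (hx : P' {ω | W ω = x} = 0) :
    Tendsto (fun n => P.real {ω | Z n ω ≤ b n}) atTop (𝓝 (P'.real {ω | W ω ≤ x})) := by
  have hshift : TendstoInMeasure P (fun n (_ : Ω) => x - b n) atTop fun _ => 0 :=
    tendstoInMeasure_of_tendsto_ae (fun _ => aestronglyMeasurable_const)
      (.of_forall fun _ => by simpa using hb.const_sub x)
  have h := hZ.add_of_tendstoInMeasure_const hshift fun _ => aemeasurable_const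
  have hlim := ProbabilityMeasure.tendsto_measure_of_null_frontier_of_tendsto' h.tendsto
    (E := Set.Iic x) <| by
      rw [ProbabilityMeasure.coe_mk, frontier_Iic,
        Measure.map_apply_of_aemeasurable h.aemeasurable_limit (measurableSet_singleton x)]
      simpa [Set.preimage] using hx
  simp only [ProbabilityMeasure.coe_mk, Measure.map_apply_of_aemeasurable h.aemeasurable_limit
    measurableSet_Iic, fun n => Measure.map_apply_of_aemeasurable (h.forall_aemeasurable n)
    (measurableSet_Iic (a := x))] at hlim
  have hle n : (Z n + fun _ => x - b n) ⁻¹' Set.Iic x = {ω | Z n ω ≤ b n} := by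
    ext ω
    simp only [Set.mem_preimage, Pi.add_apply, Set.mem_Iic, Set.mem_ofPred_eq]
    constructor <;> intro hω <;> linarith
  simp only [hle, add_zero] at hlim
  exact (ENNReal.tendsto_toReal (measure_ne_top _ _)).comp hlim

lemma tendsto_binomial_real_le {p : I} (hp0 : 0 < p) (hp1 : p < 1) {a : ℕ → ℝ} {x : ℝ}
    (ha : Tendsto (fun n : ℕ => (a n - n * p) / √(n * (p * (1 - p)))) atTop (𝓝 x)) :
    Tendsto (fun n => Bin(n, p).real {t | (t : ℝ) ≤ a n}) atTop
      (𝓝 ((gaussianReal 0 1).real (Set.Iic x))) := by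
  obtain ⟨Ω, _, P, X, hX, hlaw, hindep, _⟩ := exists_iid ℕ Ber(1, 0, p)
  have := nullSingletonClass_gaussianReal (μ := 0) (v := 1) one_ne_zero
  have h := tendsto_measureReal_le_of_tendstoInDistribution
    (tendstoInDistribution_standardized_sum hp0 hp1 hlaw hindep) ha (measure_singleton x)
  refine h.congr' ?_
  filter_upwards [eventually_gt_atTop 0] with n hn
  have hp : (0 : ℝ) < p := by exact_mod_cast hp0
  have hq : 0 < (1 : ℝ) - p := sub_pos.2 (by exact_mod_cast hp1)
  have hsqrt : 0 < √(n * (p * (1 - p) : ℝ)) := by positivity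
  rw [← (hasLaw_binomial_sum_range hX hlaw hindep n).measureReal_eq .of_discrete]
  congr! 3 with ω
  rw [div_le_div_iff_of_pos_right hsqrt, sub_le_sub_iff_right]

end Binomial

section BinomialExpectation

open MeasureTheory ProbabilityTheory unitInterval

/-- The success probability `1/5` of the binomial laws counting the top points. -/
noncomputable abbrev oneFifth : I := ⟨1 / 5, by norm_num, by norm_num⟩

lemma cast_choose_mul_succ (n k : ℕ) :
    (n.choose k : ℝ) * (n + 1) = (n + 1).choose k * (n + 1 - k) := by
  obtain hk | hk := le_or_gt k (n + 1)
  · have h := congrArg ((↑) : ℕ → ℝ) (Nat.choose_mul_succ_eq n k)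
    push_cast [Nat.cast_sub hk] at h
    exact h
  · simp [Nat.choose_eq_zero_of_lt hk, Nat.choose_eq_zero_of_lt (show n < k by omega)]

lemma choose_sub_two_mul (D t : ℕ) :
    (D : ℝ) * (D - 1) * (D - 2).choose t = D.choose t * ((D - t) * (D - t - 1)) := by
  obtain hD | hD := lt_or_ge D 2
  · interval_cases D <;> rcases t with _ | _ | t <;> simp [Nat.choose]
  obtain ⟨d, rfl⟩ := Nat.exists_eq_add_of_le' hD
  have h₁ := cast_choose_mul_succ d t
  have h₂ := cast_choose_mul_succ (d + 1) t
  rw [Nat.add_sub_cancel]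
  push_cast at h₂ ⊢
  linear_combination (d + 2 : ℝ) * h₁ + (d + 1 - t : ℝ) * h₂

lemma setIntegral_ballotWeight (D j : ℕ) (A : Set ℕ) [DecidablePred (· ∈ A)] :
    5 ^ D * ∫ t in A, ballotWeight j (D - t) ∂Bin(D, oneFifth) =
      D * (D - 1) * ∑ t ∈ Finset.Iic D,
        if t ∈ A then (floorCount (D + j - t) (j + 1) * (D - 2).choose t : ℝ) else 0 := by
  rw [← integral_indicator .of_discrete, integral_binomial, Finset.mul_sum, Finset.mul_sum]
  refine Finset.sum_congr rfl fun t ht => ?_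
  rw [Finset.mem_Iic] at ht
  rw [Set.indicator_apply]
  split_ifs
  · have hpow : (5 : ℝ) ^ D = 5 ^ t * 5 ^ (D - t) := by rw [← pow_add, Nat.add_sub_cancel' ht]
    rw [mul_comm (floorCount _ _ : ℝ), ← mul_assoc, choose_sub_two_mul, ballotWeight,
      show D - t + j = D + j - t by omega, show (1 - (1 / 5) : ℝ) = 4 / 5 by norm_num, hpow,
      div_pow, div_pow, one_pow, smul_eq_mul, Nat.cast_sub ht]
    field_simp
  · simp

end BinomialExpectation

section Asymptotics

open MeasureTheory ProbabilityTheory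

lemma ballotWeight_div_sqrt_eq_mul (j n u : ℕ) :
    ballotWeight j u / √n = ballotWeight j u / √u * √(u / n) := by
  rcases u with _ | k
  · simp only [ballotWeight_zero, zero_div, zero_mul]
  · have : √((k + 1 : ℕ) : ℝ) ≠ 0 := by positivity
    rw [Real.sqrt_div (Nat.cast_nonneg _)]
    field_simp

lemma abs_ballotWeight_sub_div_sqrt_le (j n t : ℕ) :
    |ballotWeight j (n - t) / √n| ≤ (j + 1) * 2 ^ j := by
  have hratio : ((n - t : ℕ) : ℝ) / n ≤ 1 :=
    div_le_one_of_le₀ (by exact_mod_cast n.sub_le t) (Nat.cast_nonneg _)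
  rw [ballotWeight_div_sqrt_eq_mul, abs_mul, abs_of_nonneg (Real.sqrt_nonneg _)]
  exact (mul_le_of_le_one_right (abs_nonneg _) (Real.sqrt_le_one.2 hratio)).trans
    (abs_ballotWeight_div_sqrt_le j _)

lemma tendsto_ballotWeight_sub_div_sqrt (j : ℕ) {p : ℝ} (hp : p < 1) {T : ℕ → ℕ}
    (hT : Tendsto (fun n => (T n : ℝ) / n) atTop (𝓝 p)) :
    Tendsto (fun n => ballotWeight j (n - T n) / √n) atTop
      (𝓝 ((j + 1) * 2 ^ j / (4 * √Real.pi) * √(1 - p))) := by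
  have hratio : Tendsto (fun n => ((n - T n : ℕ) : ℝ) / n) atTop (𝓝 (1 - p)) := by
    refine (hT.const_sub 1).congr' ?_
    filter_upwards [eventually_gt_atTop 0, hT.eventually_lt_const hp] with n hn hTn
    have hn' : (0 : ℝ) < n := Nat.cast_pos.2 hn
    have hle : T n ≤ n := by exact_mod_cast ((div_lt_one hn').1 hTn).le
    rw [Nat.cast_sub hle, sub_div, div_self hn'.ne']
  have htop : Tendsto (fun n => n - T n) atTop atTop := by
    rw [← tendsto_natCast_atTop_iff (R := ℝ)]
    refine (hratio.pos_mul_atTop (sub_pos.2 hp) tendsto_natCast_atTop_atTop).congr' ?_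
    filter_upwards [eventually_ne_atTop 0] with n hn
    exact div_mul_cancel₀ _ (Nat.cast_ne_zero.2 hn)
  exact (((tendsto_ballotWeight_div_sqrt j).comp htop).mul hratio.sqrt).congr fun n =>
    (ballotWeight_div_sqrt_eq_mul j n (n - T n)).symm

lemma tendsto_setIntegral_ballotWeight_div_sqrt (j : ℕ) {A : ℕ → Set ℕ} {L : ℝ}
    (hA : Tendsto (fun n => Bin(n, oneFifth).real (A n)) atTop (𝓝 L)) :
    Tendsto (fun n : ℕ => ∫ t in A n, ballotWeight j (n - t) / √n ∂Bin(n, oneFifth)) atTop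
      (𝓝 ((j + 1) * 2 ^ j / (4 * √Real.pi) * √(1 - 1 / 5) * L)) :=
  tendsto_setIntegral_binomial (abs_ballotWeight_sub_div_sqrt_le j)
    (fun _ hT => tendsto_ballotWeight_sub_div_sqrt j (by norm_num) hT) hA

lemma abs_setIntegral_ballotWeight_div_sqrt_le (j n : ℕ) (A : Set ℕ) :
    |∫ t in A, ballotWeight j (n - t) / √n ∂Bin(n, oneFifth)| ≤ (j + 1) * 2 ^ j := by
  refine (norm_setIntegral_le_of_norm_le_const (measure_lt_top _ A)
    (f := fun t => ballotWeight j (n - t) / √n) fun t _ =>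
      abs_ballotWeight_sub_div_sqrt_le j n t).trans ?_
  exact mul_le_of_le_one_right (by positivity) measureReal_le_one

lemma summable_succ_pow_mul_geometric (k : ℕ) {r : ℝ} (hr0 : 0 < r) (hr1 : r < 1) :
    Summable fun j : ℕ => ((j : ℝ) + 1) ^ k * r ^ j := by
  have hr : ‖r‖ < 1 := by rwa [Real.norm_of_nonneg hr0.le]
  have h := (summable_nat_add_iff 1).2 (summable_pow_mul_geometric_of_norm_lt_one (R := ℝ) k hr)
  refine (h.mul_right r⁻¹).congr fun j => ?_
  rw [Nat.cast_succ, pow_succ r, mul_assoc, mul_assoc, mul_inv_cancel₀ hr0.ne', mul_one]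

/-- The factor left over when the contribution of `floorCount _ (j + 1)` in size `n = D + j` is
normalized by `5 ^ n / (n * √n)`. For `D ≤ 1` it is `0`, by division by zero. -/
noncomputable def sizeFactor (j D : ℕ) : ℝ :=
  ((D + j : ℕ) * √(D + j : ℕ)) * √D / (D * (D - 1))

lemma sizeFactor_eq_zero {j D : ℕ} (hD : D ≤ 1) : sizeFactor j D = 0 := by
  interval_cases D <;> simp [sizeFactor]

lemma abs_sizeFactor_le (j D : ℕ) : |sizeFactor j D| ≤ 2 * ((j : ℝ) + 1) ^ 2 := by
  obtain hD | hD := le_or_gt D 1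
  · rw [sizeFactor_eq_zero hD, abs_zero]
    positivity
  have hD' : (2 : ℝ) ≤ D := by exact_mod_cast hD
  have : (0 : ℝ) ≤ j := j.cast_nonneg
  have hsize : ((D + j : ℕ) : ℝ) ≤ (j + 1) * D := by push_cast; nlinarith
  have hsqrt : √((D + j : ℕ) : ℝ) * √D ≤ (j + 1) * D := by
    rw [← Real.sqrt_mul (Nat.cast_nonneg _)]
    refine Real.sqrt_le_iff.2 ⟨by positivity, ?_⟩
    rw [sq]
    gcongr
    nlinarith
  have hden : 0 < (D : ℝ) * (D - 1) := by nlinarith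
  rw [sizeFactor, abs_of_nonneg (by positivity), div_le_iff₀ hden, mul_assoc]
  calc ((D + j : ℕ) : ℝ) * (√(D + j : ℕ) * √D)
      ≤ (j + 1) * D * ((j + 1) * D) := by gcongr
    _ ≤ 2 * (j + 1) ^ 2 * (D * (D - 1)) := by
      nlinarith [mul_nonneg (mul_nonneg (sq_nonneg ((j : ℝ) + 1)) D.cast_nonneg)
        (sub_nonneg.2 hD')]

lemma tendsto_add_div_self (j : ℕ) :
    Tendsto (fun D : ℕ => ((D + j : ℕ) : ℝ) / D) atTop (𝓝 1) := by
  have h := (tendsto_natCast_div_add_atTop (j : ℝ)).inv₀ one_ne_zero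
  simpa only [inv_div, inv_one, Nat.cast_add] using h

lemma tendsto_sizeFactor (j : ℕ) : Tendsto (sizeFactor j) atTop (𝓝 1) := by
  have hsub : Tendsto (fun D : ℕ => (D : ℝ) / (D - 1)) atTop (𝓝 1) := by
    simpa only [sub_eq_add_neg] using tendsto_natCast_div_add_atTop (-1 : ℝ)
  have h := ((tendsto_add_div_self j).mul (tendsto_add_div_self j).sqrt).mul hsub
  rw [Real.sqrt_one, one_mul, one_mul] at h
  refine h.congr' ?_
  filter_upwards [eventually_gt_atTop 0] with D hD
  have hsqrt : √(D : ℝ) ≠ 0 := by positivity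
  rw [sizeFactor, Real.sqrt_div (Nat.cast_nonneg _)]
  field_simp
  rw [Real.sq_sqrt D.cast_nonneg]

/-- The contribution of `floorCount _ (j + 1)` to the number of permutations of length `n` whose
number of top points lies in `A`, normalized by `5 ^ n / (n * √n)`. -/
noncomputable def floorTerm (A : Set ℕ) (n j : ℕ) : ℝ :=
  sizeFactor j (n - j) *
    (∫ t in A, ballotWeight j (n - j - t) / √(n - j : ℕ) ∂Bin(n - j, oneFifth)) / 5 ^ j

lemma floorTerm_eq_zero {A : Set ℕ} {n j : ℕ} (h : n ≤ j + 1) : floorTerm A n j = 0 := by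
  rw [floorTerm, sizeFactor_eq_zero (Nat.sub_le_iff_le_add'.2 h), zero_mul, zero_div]

open Classical in
lemma floorTerm_eq_sum {A : Set ℕ} {n j : ℕ} (h : j + 1 < n) :
    floorTerm A n j = n * √n / 5 ^ n * ∑ t ∈ Finset.Iic (n - j),
      if t ∈ A then (floorCount (n - t) (j + 1) * (n - j - 2).choose t : ℝ) else 0 := by
  obtain ⟨D, rfl⟩ := Nat.exists_eq_add_of_le' (show j ≤ n by omega)
  have hD : (2 : ℝ) ≤ D := by exact_mod_cast (show 2 ≤ D by omega)
  have hD1 : (D : ℝ) - 1 ≠ 0 := by linarith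
  have hsqrt : √(D : ℝ) ≠ 0 := by positivity
  rw [floorTerm, Nat.add_sub_cancel, integral_div, sizeFactor, eq_div_of_mul_eq (by positivity)
    ((mul_comm _ _).trans (setIntegral_ballotWeight D j A)), pow_add]
  field_simp

open Classical in
lemma card_avoidsH_topPts_mem_eq_tsum {n : ℕ} (hn : 0 < n) (A : Set ℕ) :
    n * √n / 5 ^ n * (Nat.card {σ : Equiv.Perm (Fin n) // AvoidsH σ ∧ topPts σ ∈ A} : ℝ) =
      n * √n / 5 ^ n * (if 0 ∈ A then 1 else 0) + ∑' j, floorTerm A n j := by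
  rw [tsum_eq_sum (s := Finset.range (n - 1)) fun j hj =>
      floorTerm_eq_zero (by rw [Finset.mem_range] at hj; omega),
    Finset.sum_congr rfl fun j hj => floorTerm_eq_sum (by rw [Finset.mem_range] at hj; omega),
    card_avoidsH_topPts_mem_eq_sum hn, ← Finset.mul_sum, ← mul_add]
  push_cast
  rfl

lemma abs_floorTerm_le (A : Set ℕ) (n j : ℕ) :
    |floorTerm A n j| ≤ 2 * (((j : ℝ) + 1) ^ 3 * (2 / 5) ^ j) := by
  rw [floorTerm, abs_div, abs_mul, abs_of_pos (show (0 : ℝ) < 5 ^ j by positivity)]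
  calc _ ≤ 2 * ((j : ℝ) + 1) ^ 2 * ((j + 1) * 2 ^ j) / 5 ^ j := by
        gcongr
        · exact abs_sizeFactor_le j _
        · exact abs_setIntegral_ballotWeight_div_sqrt_le j _ A
    _ = _ := by rw [div_pow]; ring

/-- The limit of `floorTerm Set.univ n j` as `n → ∞`. -/
noncomputable def floorLimit (j : ℕ) : ℝ :=
  √(1 - 1 / 5) / (4 * √Real.pi) * ((j + 1) * (2 / 5) ^ j)

lemma tendsto_floorTerm {j : ℕ} {A : ℕ → Set ℕ} {L : ℝ}
    (hA : Tendsto (fun D => Bin(D, oneFifth).real (A (D + j))) atTop (𝓝 L)) :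
    Tendsto (fun n => floorTerm (A n) n j) atTop (𝓝 (floorLimit j * L)) := by
  rw [← tendsto_add_atTop_iff_nat j]
  simp only [floorTerm, Nat.add_sub_cancel]
  convert ((tendsto_sizeFactor j).mul
    (tendsto_setIntegral_ballotWeight_div_sqrt j hA)).div_const (5 ^ j) using 2
  rw [floorLimit, div_pow]
  ring

lemma tendsto_tsum_floorTerm {A : ℕ → Set ℕ} {L : ℝ}
    (hA : ∀ j, Tendsto (fun D => Bin(D, oneFifth).real (A (D + j))) atTop (𝓝 L)) :
    Tendsto (fun n => ∑' j, floorTerm (A n) n j) atTop (𝓝 ((∑' j, floorLimit j) * L)) := by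
  rw [← tsum_mul_right]
  exact tendsto_tsum_of_dominated_convergence
    ((summable_succ_pow_mul_geometric 3 (by norm_num) (by norm_num)).mul_left 2)
    (fun j => tendsto_floorTerm (hA j)) (.of_forall fun n j => abs_floorTerm_le (A n) n j)

lemma tsum_floorLimit_pos : 0 < ∑' j, floorLimit j := by
  have hpos (j : ℕ) : 0 < floorLimit j := by
    have : 0 < √(1 - 1 / 5 : ℝ) := Real.sqrt_pos.2 (by norm_num)
    unfold floorLimit
    positivity
  refine Summable.tsum_pos (Summable.mul_left _ ?_) (fun j => (hpos j).le) 0 (hpos 0)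
  simpa only [pow_one] using
    summable_succ_pow_mul_geometric 1 (show (0 : ℝ) < 2 / 5 by norm_num) (by norm_num)

lemma tendsto_mul_sqrt_div_pow {r : ℝ} (hr : 1 < r) :
    Tendsto (fun n : ℕ => n * √n / r ^ n) atTop (𝓝 0) := by
  refine squeeze_zero (fun n => by positivity) (fun n => ?_)
    (tendsto_pow_const_div_const_pow_of_one_lt 2 hr)
  rw [sq]
  gcongr
  rcases n with _ | n
  · simp
  · exact Real.sqrt_le_iff.2 ⟨by positivity, by push_cast; nlinarith⟩

lemma tendsto_card_avoidsH_topPts_mem {A : ℕ → Set ℕ} {L : ℝ}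
    (hA : ∀ j, Tendsto (fun D => Bin(D, oneFifth).real (A (D + j))) atTop (𝓝 L)) :
    Tendsto (fun n : ℕ => n * √n / 5 ^ n *
        (Nat.card {σ : Equiv.Perm (Fin n) // AvoidsH σ ∧ topPts σ ∈ A n} : ℝ))
      atTop (𝓝 ((∑' j, floorLimit j) * L)) := by
  classical
  have hsmall : Tendsto (fun n : ℕ => n * √n / 5 ^ n * if 0 ∈ A n then (1 : ℝ) else 0)
      atTop (𝓝 0) := by
    refine squeeze_zero (fun n => by positivity)
      (fun n => mul_le_of_le_one_right (by positivity) ?_)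
      (tendsto_mul_sqrt_div_pow (by norm_num : (1 : ℝ) < 5))
    split_ifs <;> norm_num
  have h := hsmall.add (tendsto_tsum_floorTerm hA)
  rw [zero_add] at h
  refine h.congr' ?_
  filter_upwards [eventually_gt_atTop 0] with n hn
  exact (card_avoidsH_topPts_mem_eq_tsum hn (A n)).symm

lemma tendsto_card_avoidsH_topPts_mem_div {A : ℕ → Set ℕ} {L : ℝ}
    (hA : ∀ j, Tendsto (fun D => Bin(D, oneFifth).real (A (D + j))) atTop (𝓝 L)) :
    Tendsto (fun n : ℕ =>
        (Nat.card {σ : Equiv.Perm (Fin n) // AvoidsH σ ∧ topPts σ ∈ A n} : ℝ) / hCount n)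
      atTop (𝓝 L) := by
  have htotal := tendsto_card_avoidsH_topPts_mem (A := fun _ => Set.univ) (L := 1) fun _ => by
    simp only [probReal_univ, tendsto_const_nhds]
  have h := (tendsto_card_avoidsH_topPts_mem hA).div htotal (by
    rw [mul_one]; exact tsum_floorLimit_pos.ne')
  rw [mul_one, mul_div_cancel_left₀ _ tsum_floorLimit_pos.ne'] at h
  refine h.congr' ?_
  filter_upwards [eventually_gt_atTop 0] with n hn
  simp only [Set.mem_univ, and_true, Pi.div_apply]
  exact mul_div_mul_left _ _ (by positivity)

lemma tendsto_threshold (j : ℕ) (x : ℝ) :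
    Tendsto (fun D : ℕ => (((D + j : ℕ) / 5 + x * (2 * √(D + j : ℕ) / 5)) - D * (1 / 5)) /
      √(D * (1 / 5 * (1 - 1 / 5)))) atTop (𝓝 x) := by
  have hscale (D : ℝ) : √(D * (1 / 5 * (1 - 1 / 5))) = √D * (2 / 5) := by
    rw [Real.sqrt_mul' _ (by norm_num), show (1 / 5 * (1 - 1 / 5) : ℝ) = (2 / 5) ^ 2 by norm_num,
      Real.sqrt_sq (by norm_num)]
  have hshift : Tendsto (fun D : ℕ => (j / 2 : ℝ) / √D) atTop (𝓝 0) :=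
    tendsto_const_nhds.div_atTop (Real.tendsto_sqrt_atTop.comp tendsto_natCast_atTop_atTop)
  have h := hshift.add ((tendsto_add_div_self j).sqrt.const_mul x)
  rw [Real.sqrt_one, mul_one, zero_add] at h
  refine h.congr' ?_
  filter_upwards [eventually_gt_atTop 0] with D hD
  have hD0 : √(D : ℝ) ≠ 0 := by positivity
  rw [hscale, Real.sqrt_div (Nat.cast_nonneg _)]
  push_cast
  field_simp
  ring

end Asymptotics

open MeasureTheory in
theorem topPts_gaussian (x : ℝ) :
    Tendsto (fun n : ℕ =>
        (Nat.card {σ : Equiv.Perm (Fin n) //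
            AvoidsH σ ∧ (topPts σ : ℝ) ≤ (n : ℝ) / 5 + x * (2 * Real.sqrt n / 5)} : ℝ)
          / (hCount n : ℝ))
      atTop
      (nhds ((1 / Real.sqrt (2 * Real.pi)) * ∫ t in Set.Iic x, Real.exp (-t ^ 2 / 2))) := by
  rw [← gaussianReal_real_Iic]
  exact tendsto_card_avoidsH_topPts_mem_div
    (A := fun n => {t | (t : ℝ) ≤ n / 5 + x * (2 * √n / 5)}) fun j =>
      tendsto_binomial_real_le (Subtype.mk_lt_mk.2 (by norm_num)) (Subtype.mk_lt_mk.2 (by norm_num))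
        (tendsto_threshold j x)
end

section
/- Every permutation σ of length n avoiding the patterns 4213 and 2143 admits a G-gridding: there exist j, k with 0 ≤ j, k ≤ n such that (i) σ(i) ≤ k for all i ≤ j and σ(1) < σ(2) < ⋯ < σ(j); (ii) the subsequence of entries at positions > j with values > k is increasing; and (iii) the subsequence of entries at positions > j with values ≤ k avoids the pattern 213. -/
open Filter Topology PowerSeries

/-!
Call an occurrence `b a c` of 213 *obstructed* if some inversion has both entries at height `σ c` or
above. By 4213-avoidance every entry up to position `b` lies below `σ c`, so the inversion lies to
the right of `b`; an inversion among the entries up to `b` would then form a 2143 with it. Hence the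
entries up to the rightmost such `b` are increasing, and they form the left cell. Cutting just below
the lowest `c` of an occurrence of 213 to the right of the left cell leaves no 213 in the bottom
cell, no left entry in the top cell (again by 4213), and no inversion in the top cell, because that
occurrence is not obstructed.
-/

section Pattern

variable {n k : ℕ} {σ : Equiv.Perm (Fin n)}

theorem patternContains_of_strictMono {π ρ : Fin k → Fin k} (hρ : Function.LeftInverse ρ π)
    {f : Fin k → Fin n} (hf : StrictMono f) (hσ : StrictMono (σ ∘ f ∘ ρ)) :
    PatternContains σ π :=
  ⟨f, hf, fun a b => by simpa [hρ a, hρ b] using (hσ.lt_iff_lt (a := π a) (b := π b)).symm⟩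

theorem patternContains_p4213 {p q r s : Fin n} (hpq : p < q) (hqr : q < r) (hrs : r < s)
    (hσrq : σ r < σ q) (hσqs : σ q < σ s) (hσsp : σ s < σ p) : PatternContains σ p4213 :=
  patternContains_of_strictMono (ρ := ![2, 1, 3, 0]) (f := ![p, q, r, s]) (by decide)
    (by simp [*]) (by simp [Fin.strictMono_iff_lt_succ, Fin.forall_fin_succ, *])

theorem patternContains_p2143 {p q r s : Fin n} (hpq : p < q) (hqr : q < r) (hrs : r < s)
    (hσqp : σ q < σ p) (hσps : σ p < σ s) (hσsr : σ s < σ r) : PatternContains σ p2143 :=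
  patternContains_of_strictMono (ρ := ![1, 0, 3, 2]) (f := ![p, q, r, s]) (by decide)
    (by simp [*]) (by simp [Fin.strictMono_iff_lt_succ, Fin.forall_fin_succ, *])

end Pattern

section Cells

variable {α β : Type*} [Preorder α] [Preorder β]

/-- The entries of `σ` at the positions `b < a < c` form an occurrence of the pattern 213; the
letters are in the order of the values, `σ a < σ b < σ c`. -/
structure Occurs213 (σ : α → β) (b a c : α) : Prop where
  lt_left : b < a
  lt_right : a < c
  apply_lt_left : σ a < σ b
  apply_lt_right : σ b < σ c

/-- Some inversion of `σ` has both entries at height `t` or above. The bound is weak because a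
horizontal cut just below `t` leaves the entry at height `t` in the top cell. -/
def HasInversionAbove (σ : α → β) (t : β) : Prop :=
  ∃ y x, y < x ∧ σ x < σ y ∧ t ≤ σ x

/-- The positions of the left cell: those weakly left of the first entry of an occurrence of 213
that lies below an inversion. -/
def leftCell (σ : α → β) : LowerSet α :=
  lowerClosure {b | ∃ a c, Occurs213 σ b a c ∧ HasInversionAbove σ (σ c)}

/-- The values of the top row once `L` is the set of positions of the left column: those weakly
above the largest entry of an occurrence of 213 to the right of `L`. -/
def topRow (σ : α → β) (L : LowerSet α) : UpperSet β :=
  upperClosure {t | ∃ b a c, b ∉ L ∧ Occurs213 σ b a c ∧ σ c = t}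

variable {σ : α → β}

theorem mem_leftCell {i : α} :
    i ∈ leftCell σ ↔ ∃ b a c, Occurs213 σ b a c ∧ HasInversionAbove σ (σ c) ∧ i ≤ b := by
  simp only [leftCell, mem_lowerClosure, Set.mem_ofPred_eq]
  grind

theorem mem_topRow {L : LowerSet α} {t : β} :
    t ∈ topRow σ L ↔ ∃ b a c, b ∉ L ∧ Occurs213 σ b a c ∧ σ c ≤ t := by
  simp only [topRow, mem_upperClosure, Set.mem_ofPred_eq]
  grind

end Cells

theorem strictMonoOn_preimage_topRow {α β : Type*} [Preorder α] [LinearOrder β] {σ : α → β}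
    (hσ : Function.Injective σ) {L : LowerSet α} (hL : leftCell σ ≤ L) :
    StrictMonoOn σ (σ ⁻¹' topRow σ L) := by
  intro y _ x hx hyx
  obtain ⟨b, a, c, hb, hocc, hcx⟩ := mem_topRow.1 hx
  by_contra! hxy
  have hinv : HasInversionAbove σ (σ c) := ⟨y, x, hyx, hxy.lt_of_ne (hσ.ne hyx.ne'), hcx⟩
  exact hb (hL (mem_leftCell.2 ⟨b, a, c, hocc, hinv, le_rfl⟩))

section Avoidance

variable {n : ℕ} {σ : Equiv.Perm (Fin n)}

theorem Occurs213.of_p213 {f : Fin 3 → Fin n} (hf : StrictMono f)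
    (hσ : ∀ a b, p213 a < p213 b ↔ σ (f a) < σ (f b)) : Occurs213 σ (f 0) (f 1) (f 2) where
  lt_left := hf (by decide)
  lt_right := hf (by decide)
  apply_lt_left := (hσ 1 0).1 (by decide)
  apply_lt_right := (hσ 0 2).1 (by decide)

theorem Occurs213.apply_lt_of_le {b a c u : Fin n} (hocc : Occurs213 σ b a c)
    (h4213 : PatternAvoids σ p4213) (hub : u ≤ b) : σ u < σ c := by
  obtain ⟨hba, hac, hσab, hσbc⟩ := hocc
  rcases hub.eq_or_lt with rfl | hub
  · exact hσbc
  by_contra! hcu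
  have huc : u < c := hub.trans (hba.trans hac)
  exact h4213 (patternContains_p4213 hub hba hac hσab hσbc (hcu.lt_of_ne (σ.injective.ne huc.ne')))

theorem Occurs213.strictMonoOn_Iic {b a c : Fin n} (hocc : Occurs213 σ b a c)
    (h4213 : PatternAvoids σ p4213) (h2143 : PatternAvoids σ p2143)
    (hinv : HasInversionAbove σ (σ c)) : StrictMonoOn σ (Set.Iic b) := by
  obtain ⟨y, x, hyx, hσxy, hcx⟩ := hinv
  have hby : b < y := by
    by_contra! hyb
    exact (hocc.apply_lt_of_le h4213 hyb).not_ge (hcx.trans hσxy.le)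
  intro u hub v hvb huv
  by_contra! hvu
  have hux : σ u < σ x := (hocc.apply_lt_of_le h4213 hub).trans_le hcx
  exact h2143 (patternContains_p2143 huv (lt_of_le_of_lt hvb hby) hyx
    (hvu.lt_of_ne (σ.injective.ne huv.ne')) hux hσxy)

theorem strictMonoOn_leftCell (h4213 : PatternAvoids σ p4213) (h2143 : PatternAvoids σ p2143) :
    StrictMonoOn σ (leftCell σ) := by
  intro u _ v hv huv
  obtain ⟨b, a, c, hocc, hinv, hvb⟩ := mem_leftCell.1 hv
  exact hocc.strictMonoOn_Iic h4213 h2143 hinv (huv.le.trans hvb) hvb huv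

theorem apply_notMem_topRow (h4213 : PatternAvoids σ p4213) {L : LowerSet (Fin n)} {u : Fin n}
    (hu : u ∈ L) : σ u ∉ topRow σ L := by
  rw [mem_topRow]
  rintro ⟨b, a, c, hb, hocc, hcu⟩
  have hub : u ≤ b := le_of_not_ge fun hbu => hb (L.lower hbu hu)
  exact (hocc.apply_lt_of_le h4213 hub).not_ge hcu

end Avoidance

section Cutoff

variable {n : ℕ}

theorem exists_forall_mem_lowerSet_iff_val_lt (L : LowerSet (Fin n)) :
    ∃ j ≤ n, ∀ i, i ∈ L ↔ (i : ℕ) < j := by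
  rcases L.lower.eq_univ_or_Iio with hL | ⟨a, hL⟩
  · exact ⟨n, le_rfl, fun i => by simp [← SetLike.mem_coe, hL]⟩
  · exact ⟨a, a.isLt.le, fun i => by simp [← SetLike.mem_coe, hL]⟩

theorem exists_forall_mem_upperSet_iff_le_val (U : UpperSet (Fin n)) :
    ∃ k ≤ n, ∀ i, i ∈ U ↔ k ≤ (i : ℕ) := by
  obtain ⟨k, hkn, hk⟩ := exists_forall_mem_lowerSet_iff_val_lt U.compl
  exact ⟨k, hkn, fun i => by rw [← not_iff_not, ← UpperSet.mem_compl_iff, hk, not_le]⟩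

end Cutoff

theorem avoidsD_exists_GGridding {n : ℕ} (σ : Equiv.Perm (Fin n))
    (h : PatternAvoids σ p4213 ∧ PatternAvoids σ p2143) :
    ∃ j k, GGridding σ j k := by
  obtain ⟨h4213, h2143⟩ := h
  obtain ⟨j, hjn, hj⟩ := exists_forall_mem_lowerSet_iff_val_lt (leftCell σ)
  obtain ⟨k, hkn, hk⟩ := exists_forall_mem_upperSet_iff_le_val (topRow σ (leftCell σ))
  refine ⟨j, k, hjn, hkn, fun i hi => ?_, fun i₁ i₂ hlt hi₂ => ?_,
    fun i₁ i₂ hlt _ hi₁ hi₂ => ?_, ?_⟩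
  · have hlow : σ i ∉ topRow σ (leftCell σ) := apply_notMem_topRow h4213 ((hj i).2 hi)
    rw [hk] at hlow
    omega
  · exact strictMonoOn_leftCell h4213 h2143 ((hj i₁).2 (by omega)) ((hj i₂).2 hi₂) hlt
  · exact strictMonoOn_preimage_topRow σ.injective le_rfl ((hk (σ i₁)).2 (by omega))
      ((hk (σ i₂)).2 (by omega)) hlt
  · rintro ⟨f, hf, hbottom, hpattern⟩
    have hright : f 0 ∉ leftCell σ := by simpa [hj] using (hbottom 0).1
    have htop : σ (f 2) ∈ topRow σ (leftCell σ) :=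
      mem_topRow.2 ⟨f 0, f 1, f 2, hright, .of_p213 hf hpattern, le_rfl⟩
    exact ((hk _).1 htop).not_gt (hbottom 2).2
end

section
/- If a permutation σ of length n admits a G-gridding (a pair (j,k) with 0 ≤ j,k ≤ n such that σ(i) ≤ k for all i ≤ j with σ(1) < ⋯ < σ(j), the entries at positions > j with values > k increasing, and the entries at positions > j with values ≤ k avoiding 213), then σ avoids the pattern 4213. -/
open Filter Topology PowerSeries

/-! In an inversion of a gridded permutation the lower entry always lies in the 213-avoiding cell:
the left cell is increasing and below the cutoff, and the top cell is increasing. In an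
occurrence of 4213 each of the entries 2, 1, 3 is the lower entry of an inversion with 4, so they
would form a 213 in that cell. -/

/-- `f` embeds the sequence `π` into the sequence `σ` as an order-isomorphic subsequence.
Patterns and permutations are both treated as arbitrary functions between ordered types, so that
occurrences can be composed. -/
def IsOccurrence {ι κ α β : Type*} [Preorder ι] [Preorder κ] [LT α] [LT β]
    (π : κ → β) (σ : ι → α) (f : κ → ι) : Prop :=
  StrictMono f ∧ ∀ a b : κ, π a < π b ↔ σ (f a) < σ (f b)

theorem IsOccurrence.comp {ι κ μ α β γ : Type*} [Preorder ι] [Preorder κ] [Preorder μ]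
    [LT α] [LT β] [LT γ] {ρ : μ → γ} {π : κ → β} {σ : ι → α} {f : κ → ι} {g : μ → κ}
    (hf : IsOccurrence π σ f) (hg : IsOccurrence ρ π g) : IsOccurrence ρ σ (f ∘ g) :=
  ⟨hf.1.comp hg.1, fun a b => (hg.2 a b).trans (hf.2 (g a) (g b))⟩

theorem isOccurrence_p213_p4213_succ : IsOccurrence p213 p4213 Fin.succ :=
  ⟨Fin.strictMono_succ, by decide⟩

theorem p4213_succ_lt_p4213_zero : ∀ a : Fin 3, p4213 a.succ < p4213 0 := by
  decide

namespace GGridding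

variable {n j k : ℕ} {σ : Equiv.Perm (Fin n)} {i₁ i₂ : Fin n}

theorem le_pos_of_inversion (h : GGridding σ j k) (hpos : i₁ < i₂) (hval : σ i₂ < σ i₁) :
    j ≤ (i₂ : ℕ) := by
  obtain ⟨-, -, -, left_increasing, -, -⟩ := h
  by_contra! hleft
  exact (left_increasing i₁ i₂ hpos hleft).asymm hval

theorem val_le_of_inversion (h : GGridding σ j k) (hpos : i₁ < i₂) (hval : σ i₂ < σ i₁) :
    (σ i₂ : ℕ) + 1 ≤ k := by
  obtain ⟨-, -, left_le, -, top_increasing, -⟩ := h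
  by_contra! htop₂
  have htop₁ : k < (σ i₁ : ℕ) + 1 := htop₂.trans (Nat.succ_lt_succ hval)
  have hright₁ : j ≤ (i₁ : ℕ) := by
    by_contra! hleft
    exact (left_le i₁ hleft).not_gt htop₁
  exact (top_increasing i₁ i₂ hpos hright₁ htop₁ htop₂).asymm hval

theorem not_isOccurrence_p213 (h : GGridding σ j k) {f : Fin 3 → Fin n}
    (hcell : ∀ a, j ≤ (f a : ℕ) ∧ (σ (f a) : ℕ) + 1 ≤ k) : ¬ IsOccurrence p213 σ f := by
  obtain ⟨-, -, -, -, -, cell_avoids⟩ := h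
  exact fun hf => cell_avoids ⟨f, hf.1, hcell, hf.2⟩

end GGridding

theorem GGriddable_avoids_4213 {n : ℕ} (σ : Equiv.Perm (Fin n))
    (h : ∃ j k, GGridding σ j k) :
    PatternAvoids σ p4213 := by
  obtain ⟨j, k, hgrid⟩ := h
  rintro ⟨f, hf : IsOccurrence p4213 σ f⟩
  have hpos (a : Fin 3) : f 0 < f a.succ := hf.1 a.succ_pos
  have hval (a : Fin 3) : σ (f a.succ) < σ (f 0) :=
    (hf.2 a.succ 0).1 (p4213_succ_lt_p4213_zero a)
  have hcell (a : Fin 3) : j ≤ (f a.succ : ℕ) ∧ (σ (f a.succ) : ℕ) + 1 ≤ k :=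
    ⟨hgrid.le_pos_of_inversion (hpos a) (hval a), hgrid.val_le_of_inversion (hpos a) (hval a)⟩
  exact hgrid.not_isOccurrence_p213 hcell (hf.comp isOccurrence_p213_p4213_succ)
end

section
/- Let d(n) denote the number of permutations of length n avoiding the patterns 4213 and 2143, and let D = ∑_{n≥1} d(n)·zⁿ be the associated formal power series over ℚ (with constant term 0). Then D satisfies the algebraic identity (1 − 10z + 24z² − 20z³ + 4z⁴)·D² − 2·(1 − 2z)·(−1 + 5z − 7z² + 2z³)·D + z·(z − 2)·(1 − 2z)² = 0 in ℚ⟦z⟧; equivalently, D(z) = (1 − 2z)·(−1 + 5z − 7z² + 2z³ + (1 − z)·√(1 − 6z + 5z²)) / (1 − 10z + 24z² − 20z³ + 4z⁴). -/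
open Filter Topology PowerSeries

/-!
Complementing values turns the patterns 4213 and 2143 into 1342 and 3412. Every list avoiding the
latter arises in a unique way by inserting new maxima at *active* sites, so these lists are the
nodes of a generating tree. Up to isomorphism, the subtree below a list depends only on whether it
is decreasing, on the length `r` of a suffix that is decreasing and lies below everything before it,
on the number of active sites before that suffix, and on whether one or none of these remains active
to the right of a maximum put at the front; this gives the succession rule `NodeLabel.rule`.

Mark the suffix length by the same variable as the depth in the tree. The resulting series
`Fₖ = freeSeries k` of the nodes with labels `free k r` satisfy the recurrence
`X (2 - X) Fₖ₊₂ - (1 + X) Fₖ₊₁ + Fₖ = 0`. The quadratic form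
`X (2 - X) Fₖ₊₁² - (1 + X) Fₖ Fₖ₊₁ + Fₖ²` at `k` is therefore `X (2 - X)` times the form at `k + 1`,
hence divisible by every power of `X`, and vanishes (this replaces the kernel method). At `k = 0`
both `F₀` and `F₁` are affine in the generating function of the tree, and the vanishing of the form
becomes the asserted equation.
-/

open Finset.HasAntidiagonal (antidiagonal)

section GeneratingTree

variable {α β : Type*}

/-- The number of nodes `n` levels below `a` in the generating tree with succession rule `child`. -/
def levelCount (child : α → Multiset α) : ℕ → α → ℕ
  | 0, _ => 1
  | n + 1, a => ((child a).map (levelCount child n)).sum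

theorem levelCount_eq_of_rel {child : α → Multiset α} {child' : β → Multiset β}
    {Q : α → β → Prop} (hQ : ∀ a b, Q a b → Multiset.Rel Q (child a) (child' b))
    (n : ℕ) {a : α} {b : β} (hab : Q a b) : levelCount child n a = levelCount child' n b := by
  induction n generalizing a b with
  | zero => rfl
  | succ n ih =>
    refine congrArg Multiset.sum (Multiset.rel_eq.mp (Multiset.rel_map.mpr ?_))
    exact (hQ a b hab).mono fun x _ y _ hxy => ih hxy

theorem sum_map_levelCount {child : α → Multiset α} {level : ℕ → Multiset α}
    (h : ∀ m, level (m + 1) = (level m).bind child) (m n : ℕ) :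
    ((level m).map (levelCount child n)).sum = (level (m + n)).card := by
  induction n generalizing m with
  | zero => simp [levelCount]
  | succ n ih =>
    rw [← Nat.add_assoc, Nat.add_right_comm, ← ih (m + 1), h, Multiset.map_bind,
      Multiset.sum_bind]
    rfl

/-- The series `∑ aₘᵣ zᵐ⁺ʳ`, where `aₘᵣ` is the number of nodes `m` levels below the nodes of
`S r`: the bivariate generating function of the family `S` on the diagonal of its two variables. -/
noncomputable def diagSeries (R : Type*) [CommSemiring R] (child : α → Multiset α) :
    (ℕ → Multiset α) →+ R⟦X⟧ where
  toFun S := mk fun n => ∑ p ∈ antidiagonal n,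
    (((S p.1).map (levelCount child p.2)).sum : R)
  map_zero' := by ext; simp
  map_add' S T := by ext; simp [Finset.sum_add_distrib]

variable {R : Type*} [CommSemiring R] {child : α → Multiset α}

theorem coeff_diagSeries (S : ℕ → Multiset α) (n : ℕ) :
    coeff n (diagSeries R child S) =
      ∑ p ∈ antidiagonal n, (((S p.1).map (levelCount child p.2)).sum : R) := by
  rw [diagSeries, AddMonoidHom.coe_mk, ZeroHom.coe_mk, coeff_mk]

theorem diagSeries_singleton (s : ℕ → α) :
    diagSeries R child (fun r => {s r}) =
      mk 1 + X * diagSeries R child fun r => child (s r) := by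
  ext n
  cases n with
  | zero => simp [coeff_diagSeries, levelCount]
  | succ n =>
    simp [coeff_diagSeries, coeff_succ_X_mul, Finset.Nat.sum_antidiagonal_succ', levelCount]

theorem diagSeries_of_shift {S T U : ℕ → Multiset α} (h₀ : S 0 = T 0)
    (h : ∀ r, S (r + 1) = T (r + 1) + U r) :
    diagSeries R child S = diagSeries R child T + X * diagSeries R child U := by
  ext n
  cases n with
  | zero => rw [map_add, coeff_zero_X_mul, coeff_diagSeries, coeff_diagSeries]; simp [h₀]
  | succ n =>
    simp [coeff_diagSeries, coeff_succ_X_mul, Finset.Nat.sum_antidiagonal_succ, h₀, h,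
      Finset.sum_add_distrib, add_assoc]

end GeneratingTree

section KernelForm

variable {R : Type*} [CommRing R]

theorem one_sub_X_mul_cancel {f g : R⟦X⟧} (h : (1 - X) * f = (1 - X) * g) : f = g := by
  linear_combination mk 1 * h - (f - g) * mk_one_mul_one_sub_eq_one R

theorem eq_zero_of_forall_X_pow_dvd {f : R⟦X⟧} (h : ∀ n : ℕ, X ^ n ∣ f) : f = 0 := by
  ext n
  exact X_pow_dvd_iff.mp (h (n + 1)) n n.lt_succ_self

/- The recurrence turns the form at `k` into `q` times the form at `k + 1`, so the form at `k` is
divisible by every power of `X`. -/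
theorem characteristic_form_eq_zero {q c : R⟦X⟧} {a : ℕ → R⟦X⟧} (hq : X ∣ q)
    (h : ∀ k, q * a (k + 2) - c * a (k + 1) + a k = 0) (k : ℕ) :
    q * a (k + 1) ^ 2 - c * a k * a (k + 1) + a k ^ 2 = 0 := by
  refine eq_zero_of_forall_X_pow_dvd fun n => ?_
  induction n generalizing k with
  | zero => simp
  | succ n ih =>
    have form_eq : q * a (k + 1) ^ 2 - c * a k * a (k + 1) + a k ^ 2 =
        q * (q * a (k + 2) ^ 2 - c * a (k + 1) * a (k + 2) + a (k + 1) ^ 2) := by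
      linear_combination (a k - q * a (k + 2)) * h k
    rw [form_eq, pow_succ']
    exact mul_dvd_mul hq (ih (k + 1))

end KernelForm

/-- The labels of the generating tree of lists avoiding 1342 and 3412 (see `HasLabel`). The last
parameter `r` is always the length of a low suffix: one that is decreasing and lies below all the
entries before it.
* `decr r`: a decreasing list of length `r + 1`;
* `free k r`: `k + 1` active sites precede the low suffix, and none of them remains active to the
  right of a new maximum put at the front;
* `tail k r`: `k + 2` active sites precede the low suffix, and exactly one of them remains active to
  the right of a new maximum put at the front. -/
inductive NodeLabel : Type
  | decr (r : ℕ)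
  | free (k r : ℕ)
  | tail (k r : ℕ)

namespace NodeLabel

/-- The labels `tail k r, tail (k + 1) (r - 1), …, tail (k + r) 0` of the children obtained by
inserting a new maximum into one of the `r + 1` sites of a low suffix of length `r` that is preceded
by `k + 1` active sites. -/
def suffix : ℕ → ℕ → Multiset NodeLabel
  | k, 0 => {tail k 0}
  | k, r + 1 => tail k (r + 1) ::ₘ suffix (k + 1) r

/-- The succession rule: the labels of the children of a node with the given label. -/
def rule : NodeLabel → Multiset NodeLabel
  | decr r => {decr (r + 1)} + suffix 0 r
  | free k r => ∑ j ∈ Finset.range (k + 1), {free j r} + suffix k r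
  | tail k r =>
      {tail 0 r} + ∑ j ∈ Finset.range k, {free (j + 1) r} + {tail k r} + suffix (k + 1) r

variable (R : Type*) [CommRing R]

/-- The diagonal series of the family of labels `free k`. -/
noncomputable def freeSeries (k : ℕ) : R⟦X⟧ := diagSeries R rule fun r => {free k r}

/-- The diagonal series of the family of labels `tail k`. -/
noncomputable def tailSeries (k : ℕ) : R⟦X⟧ := diagSeries R rule fun r => {tail k r}

/-- The diagonal series of the family of multisets `suffix k`. -/
noncomputable def suffixSeries (k : ℕ) : R⟦X⟧ := diagSeries R rule (suffix k)

theorem suffixSeries_eq (k : ℕ) :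
    suffixSeries R k = tailSeries R k + X * suffixSeries R (k + 1) :=
  diagSeries_of_shift rfl fun _ => (Multiset.singleton_add _ _).symm

theorem freeSeries_eq (k : ℕ) :
    freeSeries R k =
      mk 1 + X * (∑ j ∈ Finset.range (k + 1), freeSeries R j + suffixSeries R k) := by
  have rule_eq : (fun r => rule (free k r)) =
      ∑ j ∈ Finset.range (k + 1), (fun r => {free j r}) + suffix k := by
    ext1 r; simp [rule]
  have unfolded := diagSeries_singleton (R := R) (child := rule) fun r => free k r
  rwa [rule_eq, map_add, map_sum] at unfolded

theorem tailSeries_eq (k : ℕ) :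
    tailSeries R k = mk 1 + X * (tailSeries R 0 + ∑ j ∈ Finset.range k, freeSeries R (j + 1) +
      tailSeries R k + suffixSeries R (k + 1)) := by
  have rule_eq : (fun r => rule (tail k r)) =
      (fun r => {tail 0 r}) + ∑ j ∈ Finset.range k, (fun r => {free (j + 1) r}) +
        (fun r => {tail k r}) + suffix (k + 1) := by
    ext1 r; simp [rule]
  have unfolded := diagSeries_singleton (R := R) (child := rule) fun r => tail k r
  rwa [rule_eq, map_add, map_add, map_add, map_sum] at unfolded

theorem levelCount_rule_decr (n r : ℕ) :
    levelCount rule (n + 1) (decr r) =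
      1 + ∑ p ∈ antidiagonal n,
        ((suffix 0 (r + p.1)).map (levelCount rule p.2)).sum := by
  induction n generalizing r with
  | zero => simp [levelCount, rule]
  | succ n ih =>
    have rule_sum : levelCount rule (n + 2) (decr r) = levelCount rule (n + 1) (decr (r + 1)) +
        ((suffix 0 r).map (levelCount rule (n + 1))).sum := by
      rw [levelCount]; simp [rule]
    rw [rule_sum, ih, Finset.Nat.sum_antidiagonal_succ]
    simp only [Nat.add_zero, Nat.add_comm, Nat.add_left_comm]

/-- The generating function of the levels of the generating tree with root `decr 0`. -/
noncomputable def rootSeries : R⟦X⟧ := mk fun n => (levelCount rule n (decr 0) : R)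

theorem rootSeries_eq : rootSeries R = mk 1 + X * suffixSeries R 0 := by
  ext n
  cases n with
  | zero => simp [rootSeries, levelCount]
  | succ n =>
    simp [rootSeries, suffixSeries, levelCount_rule_decr, coeff_diagSeries, coeff_succ_X_mul]

theorem freeSeries_succ_sub (k : ℕ) :
    (1 - X) * freeSeries R (k + 1) - freeSeries R k =
      X * (suffixSeries R (k + 1) - suffixSeries R k) := by
  have eq_succ := freeSeries_eq R (k + 1)
  rw [Finset.sum_range_succ] at eq_succ
  linear_combination eq_succ - freeSeries_eq R k

theorem rootSeries_eq_freeSeries : rootSeries R = (1 - X) * freeSeries R 0 := by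
  have eq_zero := freeSeries_eq R 0
  rw [Finset.sum_range_one] at eq_zero
  linear_combination rootSeries_eq R - eq_zero

theorem tailSeries_zero_sub_freeSeries_zero :
    tailSeries R 0 - freeSeries R 0 = X * suffixSeries R 1 := by
  have free_zero := freeSeries_eq R 0
  have tail_zero := tailSeries_eq R 0
  rw [Finset.sum_range_one] at free_zero
  rw [Finset.sum_range_zero] at tail_zero
  apply one_sub_X_mul_cancel
  linear_combination tail_zero - free_zero - X * suffixSeries_eq R 0

theorem tailSeries_sub_freeSeries (k : ℕ) :
    (1 - X) * (tailSeries R k - freeSeries R (k + 1)) = X ^ 2 * suffixSeries R 1 := by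
  have free_succ := freeSeries_eq R (k + 1)
  rw [Finset.sum_range_succ', Finset.sum_range_succ] at free_succ
  linear_combination tailSeries_eq R k - free_succ + X * tailSeries_zero_sub_freeSeries_zero R

theorem freeSeries_recurrence (k : ℕ) :
    X * (2 - X) * freeSeries R (k + 2) - (1 + X) * freeSeries R (k + 1) + freeSeries R k = 0 := by
  have diff_eq : tailSeries R (k + 1) - freeSeries R (k + 2) =
      tailSeries R k - freeSeries R (k + 1) :=
    one_sub_X_mul_cancel
      ((tailSeries_sub_freeSeries R (k + 1)).trans (tailSeries_sub_freeSeries R k).symm)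
  linear_combination X * freeSeries_succ_sub R (k + 1) - freeSeries_succ_sub R k
    - X * suffixSeries_eq R (k + 1) + X * suffixSeries_eq R k - X * diff_eq

theorem freeSeries_one_eq :
    2 * X * (1 - X) ^ 2 * freeSeries R 1 =
      rootSeries R * (1 - 2 * X + 2 * X ^ 2) - (1 - 2 * X) := by
  have suffix_zero : (1 - X) * suffixSeries R 0 =
      (1 - X) * freeSeries R 1 + X * suffixSeries R 1 := by
    linear_combination (1 - X) * suffixSeries_eq R 0 + tailSeries_sub_freeSeries R 0
  linear_combination -X * (1 - X) * (suffix_zero - freeSeries_succ_sub R 0)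
    - X * rootSeries_eq_freeSeries R - (1 - 2 * X) * (1 - X) * rootSeries_eq R
    - (1 - 2 * X) * mk_one_mul_one_sub_eq_one R

theorem rootSeries_algebraic :
    (1 - 10 * X + 24 * X ^ 2 - 20 * X ^ 3 + 4 * X ^ 4) * (X * rootSeries R) ^ 2
      - 2 * (1 - 2 * X) * (-1 + 5 * X - 7 * X ^ 2 + 2 * X ^ 3) * (X * rootSeries R)
      + X * (X - 2) * (1 - 2 * X) ^ 2 = 0 := by
  have form_eq_zero :=
    characteristic_form_eq_zero (dvd_mul_right X (2 - X)) (freeSeries_recurrence R) 0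
  have cleared : X * (2 - X) * (2 * X * (1 - X) ^ 2 * freeSeries R 1) ^ 2
      - 2 * X * (1 - X ^ 2) * rootSeries R * (2 * X * (1 - X) ^ 2 * freeSeries R 1)
      + (2 * X * (1 - X) * rootSeries R) ^ 2 = 0 := by
    rw [rootSeries_eq_freeSeries]
    linear_combination 4 * X ^ 2 * (1 - X) ^ 4 * form_eq_zero
  rw [freeSeries_one_eq] at cleared
  linear_combination -cleared

end NodeLabel
section ListInsertion

variable {α : Type*} {l : List α} {i j : ℕ} {a : α}

theorem insertIdx_eq_take_append_cons_drop (h : i ≤ l.length) :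
    l.insertIdx i a = l.take i ++ a :: l.drop i := by
  induction l generalizing i with
  | nil => simp_all
  | cons b l ih => cases i <;> simp_all

theorem drop_insertIdx_of_le (h : j ≤ i) (hi : i ≤ l.length) :
    (l.insertIdx i a).drop j = (l.drop j).insertIdx (i - j) a := by
  induction l generalizing i j with
  | nil => rcases i with _ | i <;> rcases j with _ | j <;> simp_all
  | cons b l ih => rcases i with _ | i <;> rcases j with _ | j <;> simp_all

theorem take_insertIdx_succ (h : i ≤ j) :
    (l.insertIdx i a).take (j + 1) = (l.take j).insertIdx i a := by
  induction l generalizing i j with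
  | nil => rcases i with _ | i <;> simp
  | cons b l ih => rcases i with _ | i <;> rcases j with _ | j <;> simp_all

theorem drop_insertIdx_succ (h : i ≤ j) (hi : i ≤ l.length) :
    (l.insertIdx i a).drop (j + 1) = l.drop j := by
  induction l generalizing i j with
  | nil => rcases i with _ | i <;> simp_all
  | cons b l ih => rcases i with _ | i <;> rcases j with _ | j <;> simp_all

theorem pairwise_insertIdx {R : α → α → Prop} (h : i ≤ l.length) :
    (l.insertIdx i a).Pairwise R ↔
      l.Pairwise R ∧ (∀ x ∈ l.take i, R x a) ∧ ∀ x ∈ l.drop i, R a x := by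
  have pairwise_split := List.pairwise_append (R := R) (l₁ := l.take i) (l₂ := l.drop i)
  rw [List.take_append_drop] at pairwise_split
  rw [insertIdx_eq_take_append_cons_drop h, pairwise_split, List.pairwise_append,
    List.pairwise_cons]
  grind

end ListInsertion

section Sites

variable {α : Type*} [LinearOrder α] {l u v : List α} {M : α} {p q p' q' s : ℕ}

/-- A maximum inserted between `u` and `v` completes no occurrence of 3412 (in which it plays the 4
after the 3) nor of 1342 (in which it plays the 4 before the 2). -/
def ActiveSplit (u v : List α) : Prop :=
  (∀ a ∈ u, v.Pairwise fun c b => ¬(c < b ∧ b < a)) ∧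
    ∀ b ∈ v, u.Pairwise fun c a => ¬(c < b ∧ b < a)

instance : Decidable (ActiveSplit u v) := inferInstanceAs (Decidable (_ ∧ _))

/-- The list `v` is weakly decreasing and lies weakly below `u`. -/
def LowSplit (u v : List α) : Prop :=
  v.Pairwise (· ≥ ·) ∧ ∀ a ∈ u, ∀ b ∈ v, b ≤ a

theorem LowSplit.activeSplit (h : LowSplit u v) : ActiveSplit u v :=
  ⟨fun _ _ => h.1.imp fun hcb hlt => hcb.not_gt hlt.1,
    fun b hb => List.pairwise_of_forall_mem_list fun c hc _ _ hlt => (h.2 c hc b hb).not_gt hlt.1⟩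

theorem activeSplit_insertIdx_right (hp : p ≤ v.length) (hM : ∀ x ∈ u, x < M) :
    ActiveSplit u (v.insertIdx p M) ↔ ActiveSplit u v := by
  have new_max : u.Pairwise fun c a => ¬(c < M ∧ M < a) :=
    List.pairwise_of_forall_mem_list fun c _ a ha hlt => (hM a ha).not_gt hlt.2
  simp only [ActiveSplit, pairwise_insertIdx hp, List.mem_insertIdx hp, forall_eq_or_imp, new_max,
    true_and]
  refine and_congr_left fun _ => forall₂_congr fun a ha => and_iff_left ⟨fun c _ hlt => ?_,
    fun b _ hlt => ?_⟩
  · exact (hM a ha).not_gt hlt.2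
  · exact (hM a ha).not_gt (hlt.1.trans hlt.2)

theorem activeSplit_insertIdx_left (hp : p ≤ u.length) (hM : ∀ x ∈ v, x < M) :
    ActiveSplit (u.insertIdx p M) v ↔ ActiveSplit u v ∧ LowSplit (u.take p) v := by
  have new_max : (v.Pairwise fun c b => ¬(c < b ∧ b < M)) ↔ v.Pairwise (· ≥ ·) :=
    ⟨List.Pairwise.imp_of_mem fun _ hb h => not_lt.mp fun hlt => h ⟨hlt, hM _ hb⟩,
      List.Pairwise.imp fun h hlt => h.not_gt hlt.1⟩
  have new_pair : ∀ b ∈ v, (u.insertIdx p M).Pairwise (fun c a => ¬(c < b ∧ b < a)) ↔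
      u.Pairwise (fun c a => ¬(c < b ∧ b < a)) ∧ ∀ c ∈ u.take p, b ≤ c := fun b hb => by
    simp only [pairwise_insertIdx hp, hM b hb, (hM b hb).not_gt, and_true, not_lt, false_and,
      not_false_eq_true, implies_true]
  simp only [ActiveSplit, LowSplit, List.mem_insertIdx hp, forall_eq_or_imp, new_max]
  grind

theorem lowSplit_insertIdx_left (hp : p ≤ u.length) (hM : ∀ x ∈ v, x < M) :
    LowSplit (u.insertIdx p M) v ↔ LowSplit u v := by
  simp only [LowSplit, List.mem_insertIdx hp, forall_eq_or_imp]
  exact and_congr_right fun _ => and_iff_right fun b hb => (hM b hb).le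

theorem lowSplit_insertIdx_right (hp : p ≤ v.length) (hu : ∀ x ∈ u, x < M) (hv : ∀ x ∈ v, x < M) :
    LowSplit u (v.insertIdx p M) ↔ u = [] ∧ v.take p = [] ∧ LowSplit u v := by
  have eq_nil_iff : ∀ w : List α, (∀ x ∈ w, x < M) → ((∀ x ∈ w, M ≤ x) ↔ w = []) := fun w hw =>
    ⟨fun h => List.eq_nil_iff_forall_not_mem.mpr fun x hx => (hw x hx).not_ge (h x hx),
      by rintro rfl; simp⟩
  have hv_take : ∀ x ∈ v.take p, x < M := fun x hx => hv x (List.mem_of_mem_take hx)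
  have hv_drop : ∀ x ∈ v.drop p, x ≤ M := fun x hx => (hv x (List.mem_of_mem_drop hx)).le
  simp only [LowSplit, pairwise_insertIdx hp, List.mem_insertIdx hp, forall_eq_or_imp, ge_iff_le,
    forall_and, eq_nil_iff u hu, eq_nil_iff _ hv_take, eq_true hv_drop]
  tauto

/-- Site `p` of `l` is active: inserting a new maximum at index `p` creates neither a 1342 nor a
3412. -/
def ActiveAt (l : List α) (p : ℕ) : Prop := ActiveSplit (l.take p) (l.drop p)

instance : DecidablePred (ActiveAt l) := fun _ => inferInstanceAs (Decidable (ActiveSplit _ _))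

/-- The condition under which an active site `q ≥ p` of `l` remains active, as site `q + 1`, once a
new maximum has been inserted at index `p` (`activeAt_insertIdx_succ`). -/
def Survives (l : List α) (p q : ℕ) : Prop := LowSplit (l.take p) (l.drop q)

theorem Survives.activeAt (h : Survives l q q) : ActiveAt l q := h.activeSplit

theorem Survives.mono (h : Survives l p q) (hp : p' ≤ p) (hq : q ≤ q') : Survives l p' q' :=
  ⟨h.1.sublist (List.drop_sublist_drop_left l hq), fun a ha b hb =>
    h.2 a (List.take_subset_take_left l hp ha) b (List.drop_subset_drop_left l hq hb)⟩

theorem Survives.diagonal_mono (h : Survives l s s) (hq : s ≤ q) : Survives l q q := by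
  refine ⟨(h.mono le_rfl hq).1, fun a ha b hb => ?_⟩
  obtain ⟨t, rfl⟩ := Nat.exists_eq_add_of_le hq
  rw [List.take_add, List.mem_append] at ha
  rw [← List.drop_drop] at hb
  rcases ha with ha | ha
  · exact h.2 a ha b (List.mem_of_mem_drop hb)
  · have low := h.1
    rw [← (l.drop s).take_append_drop t, List.pairwise_append] at low
    exact low.2.2 a ha b hb

section Insertion

variable (hp : p ≤ l.length)
include hp

theorem survives_insertIdx_of_le_succ (hp' : p' ≤ p) (hq : p ≤ q) :
    Survives (l.insertIdx p M) p' (q + 1) ↔ Survives l p' q := by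
  rw [Survives, List.take_insertIdx_eq_take_of_le _ _ _ _ hp', drop_insertIdx_succ hq hp]
  rfl

variable (hM : ∀ x ∈ l, x < M)
include hM

theorem activeAt_insertIdx_of_le (hq : q ≤ p) : ActiveAt (l.insertIdx p M) q ↔ ActiveAt l q := by
  rw [ActiveAt, List.take_insertIdx_eq_take_of_le _ _ _ _ hq, drop_insertIdx_of_le hq hp]
  exact activeSplit_insertIdx_right (by grind) fun x hx => hM x (List.mem_of_mem_take hx)

theorem activeAt_insertIdx_succ (hq : p ≤ q) :
    ActiveAt (l.insertIdx p M) (q + 1) ↔ ActiveAt l q ∧ Survives l p q := by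
  rw [ActiveAt, take_insertIdx_succ hq, drop_insertIdx_succ hq hp,
    activeSplit_insertIdx_left (by grind) fun x hx => hM x (List.mem_of_mem_drop hx),
    List.take_take, min_eq_left hq]
  rfl

theorem survives_insertIdx_of_le (hp' : p' ≤ p) (hq' : q' ≤ p) :
    Survives (l.insertIdx p M) p' q' ↔ p' = 0 ∧ q' = p ∧ Survives l 0 p := by
  rw [Survives, List.take_insertIdx_eq_take_of_le _ _ _ _ hp', drop_insertIdx_of_le hq' hp,
    lowSplit_insertIdx_right (by grind) (fun x hx => hM x (List.mem_of_mem_take hx))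
      fun x hx => hM x (List.mem_of_mem_drop hx)]
  have take_eq_nil : l.take p' = [] ↔ p' = 0 := by rw [← List.length_eq_zero_iff]; grind
  have drop_eq_nil : (l.drop q').take (p - q') = [] ↔ q' = p := by
    rw [← List.length_eq_zero_iff]; grind
  rw [take_eq_nil, drop_eq_nil]
  grind [Survives]

theorem survives_insertIdx_succ_succ (hp' : p ≤ p') (hq : p ≤ q) :
    Survives (l.insertIdx p M) (p' + 1) (q + 1) ↔ Survives l p' q := by
  rw [Survives, take_insertIdx_succ hp', drop_insertIdx_succ hq hp]
  exact lowSplit_insertIdx_left (by grind) fun x hx => hM x (List.mem_of_mem_drop hx)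

end Insertion

end Sites

section Count

variable {P Q : ℕ → Prop} [DecidablePred P] [DecidablePred Q] {m n : ℕ}

theorem count_congr_of_lt (h : ∀ i < n, P i ↔ Q i) : Nat.count P n = Nat.count Q n :=
  le_antisymm (Nat.count_mono_left fun i hi => (h i hi).mp)
    (Nat.count_mono_left fun i hi => (h i hi).mpr)

theorem count_eq_of_forall_not (hmn : m ≤ n) (h : ∀ i, m ≤ i → i < n → ¬P i) :
    Nat.count P n = Nat.count P m := by
  obtain ⟨d, rfl⟩ := Nat.exists_eq_add_of_le hmn
  rw [Nat.count_add, Nat.add_eq_left, Nat.count_iff_forall_not]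
  exact fun i hi => h _ (Nat.le_add_right m i) (Nat.add_lt_add_left hi m)

theorem map_count_filter_range (n : ℕ) :
    ((Multiset.range n).filter P).map (Nat.count P) = Multiset.range (Nat.count P n) := by
  induction n with
  | zero => simp
  | succ n ih =>
    by_cases hn : P n <;>
      simp [hn, Multiset.range_succ, Nat.count_succ, ih]

end Count

section Labels

/-- Inserts the new maximum at index `p` of a rearrangement `l` of `0, …, l.length - 1`. -/
def insertMax (l : List ℕ) (p : ℕ) : List ℕ := l.insertIdx p l.length

/-- The entries of `l` from index `s > 0` on form a low suffix of length `r`, which `k` active sites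
precede. -/
structure HasLowSuffix (l : List ℕ) (s k r : ℕ) : Prop where
  lt_length : ∀ x ∈ l, x < l.length
  pos : 0 < s
  length_eq : l.length = s + r
  low : Survives l s s
  count_eq : Nat.count (ActiveAt l) s = k

/-- Among the active sites before `s`, only `m > 0` can remain active to the right of a new maximum
inserted at an active site, and it does so exactly when that maximum is put at the front. -/
structure IsSoleSurvivor (l : List ℕ) (s m : ℕ) : Prop where
  pos : 0 < m
  lt : m < s
  activeAt : ActiveAt l m
  survives_iff : ∀ p q, ActiveAt l p → ActiveAt l q → p ≤ q → q < s →
    (Survives l p q ↔ p = 0 ∧ q = m)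

/-- The list `l` is a node of the generating tree with the given label. -/
inductive HasLabel : List ℕ → NodeLabel → Prop
  | decr {l : List ℕ} {r : ℕ} : (∀ x ∈ l, x < l.length) → l.length = r + 1 → Survives l 0 0 →
      HasLabel l (.decr r)
  | free {l : List ℕ} {s k r : ℕ} : HasLowSuffix l s (k + 1) r →
      (∀ q < s, ActiveAt l q → ¬Survives l 0 q) → HasLabel l (.free k r)
  | tail {l : List ℕ} {s m k r : ℕ} : HasLowSuffix l s (k + 2) r → IsSoleSurvivor l s m →
      HasLabel l (.tail k r)

variable {l : List ℕ} {p q s k r m : ℕ}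

theorem lt_length_insertMax (h : ∀ x ∈ l, x < l.length) (hp : p ≤ l.length) :
    ∀ x ∈ insertMax l p, x < (insertMax l p).length := by
  rw [insertMax, List.length_insertIdx_of_le_length hp]
  simp only [List.mem_insertIdx hp, forall_eq_or_imp]
  exact ⟨Nat.lt_succ_self _, fun x hx => (h x hx).trans (Nat.lt_succ_self _)⟩

theorem count_insertMax (hlt : ∀ x ∈ l, x < l.length) (hp : p ≤ l.length) (hq : q ≤ p + 1) :
    Nat.count (ActiveAt (insertMax l p)) q = Nat.count (ActiveAt l) q :=
  count_congr_of_lt fun _ hi => activeAt_insertIdx_of_le hp hlt (by omega)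

theorem count_insertMax_eq_succ (hlt : ∀ x ∈ l, x < l.length) (hp : p ≤ l.length)
    (active : ActiveAt l p) :
    Nat.count (ActiveAt (insertMax l p)) (p + 1) = Nat.count (ActiveAt l) p + 1 := by
  rw [count_insertMax hlt hp le_rfl, Nat.count_succ, if_pos active]

theorem activeAt_insertMax_succ (hlt : ∀ x ∈ l, x < l.length) (hp : p ≤ l.length) (hpq : p ≤ q) :
    ActiveAt (insertMax l p) (q + 1) ↔ ActiveAt l q ∧ Survives l p q :=
  activeAt_insertIdx_succ hp hlt hpq

namespace HasLowSuffix

theorem activeAt (h : HasLowSuffix l s k r) (hq : s ≤ q) : ActiveAt l q :=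
  (h.low.diagonal_mono hq).activeAt

theorem succ (h : HasLowSuffix l s k (r + 1)) : HasLowSuffix l (s + 1) (k + 1) r where
  lt_length := h.lt_length
  pos := s.succ_pos
  length_eq := h.length_eq.trans (by omega)
  low := h.low.diagonal_mono s.le_succ
  count_eq := by rw [Nat.count_succ, h.count_eq, if_pos (h.activeAt le_rfl)]

theorem insertMax_of_le (h : HasLowSuffix l s k r) (hp : p ≤ s) :
    HasLowSuffix (insertMax l p) (s + 1) (Nat.count (ActiveAt (insertMax l p)) (s + 1)) r := by
  have hpl : p ≤ l.length := by have := h.length_eq; omega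
  exact {
    lt_length := lt_length_insertMax h.lt_length hpl
    pos := s.succ_pos
    length_eq := (List.length_insertIdx_of_le_length hpl _).trans (by have := h.length_eq; omega)
    low := (survives_insertIdx_succ_succ hpl h.lt_length hp hp).mpr h.low
    count_eq := rfl }

theorem hasLabel_insertMax_self (h : HasLowSuffix l s (k + 1) r) :
    HasLabel (insertMax l s) (.tail k r) := by
  have hs : s ≤ l.length := h.length_eq ▸ Nat.le_add_right s r
  have count_eq : Nat.count (ActiveAt (insertMax l s)) (s + 1) = k + 2 := by
    rw [count_insertMax_eq_succ h.lt_length hs (h.activeAt le_rfl), h.count_eq]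
  refine .tail (count_eq ▸ h.insertMax_of_le le_rfl) ⟨h.pos, s.lt_succ_self,
    (activeAt_insertIdx_of_le hs h.lt_length le_rfl).mpr (h.activeAt le_rfl),
    fun p q _ _ hpq hqs => ?_⟩
  rw [insertMax, survives_insertIdx_of_le hs h.lt_length (by omega) (by omega)]
  have := h.low.mono s.zero_le le_rfl
  tauto

theorem hasLabel_insertMax_of_not_survives (h : HasLowSuffix l s k r) (hp : p < s)
    (active : ActiveAt l p) (not_zero : ¬Survives l 0 p)
    (not_right : ∀ q, p ≤ q → q < s → ActiveAt l q → ¬Survives l p q) :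
    HasLabel (insertMax l p) (.free (Nat.count (ActiveAt l) p) r) := by
  have hpl : p ≤ l.length := by have := h.length_eq; omega
  have none_right : ∀ q, p + 1 ≤ q → q < s + 1 → ¬ActiveAt (insertMax l p) q := by
    rintro (_ | q) hpq hqs
    · omega
    · rw [activeAt_insertMax_succ h.lt_length hpl (by omega)]
      exact fun ⟨hq, hsurv⟩ => not_right q (by omega) (by omega) hq hsurv
  have count_eq : Nat.count (ActiveAt (insertMax l p)) (s + 1) = Nat.count (ActiveAt l) p + 1 := by
    rw [count_eq_of_forall_not (by omega) none_right,
      count_insertMax_eq_succ h.lt_length hpl active]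
  refine .free (count_eq ▸ h.insertMax_of_le hp.le) fun q hq hq_active hsurv => ?_
  have hqp : q ≤ p := by
    by_contra! hlt
    exact none_right q hlt hq hq_active
  obtain ⟨-, -, hsurv⟩ :=
    (survives_insertIdx_of_le hpl h.lt_length p.zero_le hqp).mp hsurv
  exact not_zero hsurv

end HasLowSuffix

theorem hasLowSuffix_of_survives_zero (hlt : ∀ x ∈ l, x < l.length) (hlen : l.length = r + 1)
    (hsurv : Survives l 0 0) : HasLowSuffix l 1 1 r where
  lt_length := hlt
  pos := Nat.one_pos
  length_eq := by omega
  low := hsurv.diagonal_mono (Nat.zero_le 1)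
  count_eq := by rw [Nat.count_one, if_pos hsurv.activeAt]

theorem hasLabel_decr_insertMax (hlt : ∀ x ∈ l, x < l.length) (hlen : l.length = r + 1)
    (hsurv : Survives l 0 0) : HasLabel (insertMax l 0) (.decr (r + 1)) :=
  .decr (lt_length_insertMax hlt (Nat.zero_le _)) (by simp [insertMax, hlen])
    ((survives_insertIdx_of_le (Nat.zero_le _) hlt le_rfl le_rfl).mpr ⟨rfl, rfl, hsurv⟩)

theorem activeAt_zero : ActiveAt l 0 := by simp [ActiveAt, ActiveSplit]

namespace IsSoleSurvivor

theorem survives_zero (hm : IsSoleSurvivor l s m) : Survives l 0 m :=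
  (hm.survives_iff 0 m activeAt_zero hm.activeAt m.zero_le hm.lt).mpr ⟨rfl, rfl⟩

theorem not_activeAt (hm : IsSoleSurvivor l s m) (hmq : m < q) (hqs : q < s) : ¬ActiveAt l q :=
  fun hq => hmq.ne' ((hm.survives_iff 0 q activeAt_zero hq q.zero_le hqs).mp
    (hm.survives_zero.mono le_rfl hmq.le)).2

theorem hasLabel_insertMax_zero (hm : IsSoleSurvivor l s m) (h : HasLowSuffix l s k r) :
    HasLabel (insertMax l 0) (.tail 0 r) := by
  have ⟨hpos, hlt, active, survives_iff⟩ := hm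
  have active_succ : ∀ q < s, ActiveAt (insertMax l 0) (q + 1) ↔ q = m := fun q hq => by
    rw [activeAt_insertMax_succ h.lt_length (Nat.zero_le _) q.zero_le]
    grind [activeAt_zero]
  have not_survives_zero : ¬Survives (insertMax l 0) 0 0 := by
    rw [insertMax, survives_insertIdx_of_le (Nat.zero_le _) h.lt_length le_rfl le_rfl]
    grind [activeAt_zero]
  have none_left : ∀ q, 1 ≤ q → q < m + 1 → ¬ActiveAt (insertMax l 0) q := by
    rintro (_ | q) hpq hqs <;> grind
  have none_right : ∀ q, m + 2 ≤ q → q < s + 1 → ¬ActiveAt (insertMax l 0) q := by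
    rintro (_ | q) hpq hqs <;> grind
  have count_eq : Nat.count (ActiveAt (insertMax l 0)) (s + 1) = 0 + 2 := by
    rw [count_eq_of_forall_not (by omega) none_right, Nat.count_succ,
      count_eq_of_forall_not (by omega) none_left, if_pos ((active_succ m hlt).mpr rfl),
      count_insertMax_eq_succ h.lt_length (Nat.zero_le _) activeAt_zero, Nat.count_zero]
  refine .tail (m := m + 1) (count_eq ▸ h.insertMax_of_le s.zero_le) ⟨m.succ_pos, by omega,
    (active_succ m hlt).mpr rfl, fun p q _ hq hpq hqs => ?_⟩
  rcases q with _ | q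
  · grind
  obtain rfl : q = m := (active_succ q (by omega)).mp hq
  rcases p with _ | p
  · rw [insertMax, survives_insertIdx_of_le_succ (Nat.zero_le _) le_rfl q.zero_le]
    exact iff_of_true hm.survives_zero ⟨rfl, rfl⟩
  · rw [insertMax, survives_insertIdx_succ_succ (Nat.zero_le _) h.lt_length p.zero_le q.zero_le]
    grind

theorem hasLabel_insertMax_of_lt (hm : IsSoleSurvivor l s m) (h : HasLowSuffix l s k r)
    (hp : 0 < p) (hpm : p < m) (active : ActiveAt l p) :
    HasLabel (insertMax l p) (.free (Nat.count (ActiveAt l) p) r) := by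
  refine h.hasLabel_insertMax_of_not_survives (hpm.trans hm.lt) active ?_ fun q hpq hqs hq => ?_
  · rw [hm.survives_iff 0 p activeAt_zero active p.zero_le (hpm.trans hm.lt)]
    exact fun hsole => hpm.ne hsole.2
  · rw [hm.survives_iff p q active hq hpq hqs]
    exact fun hsole => hp.ne' hsole.1

theorem hasLabel_insertMax_self (hm : IsSoleSurvivor l s m) (h : HasLowSuffix l s (k + 2) r) :
    HasLabel (insertMax l m) (.tail k r) := by
  have ⟨hpos, hlt, active, survives_iff⟩ := hm
  have hml : m ≤ l.length := by have := h.length_eq; omega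
  have none_right : ∀ q, m + 1 ≤ q → q < s + 1 → ¬ActiveAt (insertMax l m) q := by
    rintro (_ | q) hpq hqs
    · omega
    · rw [activeAt_insertMax_succ h.lt_length hml (by omega)]
      grind
  have count_eq : Nat.count (ActiveAt (insertMax l m)) (s + 1) = k + 2 := by
    rw [count_eq_of_forall_not (by omega) none_right, count_insertMax h.lt_length hml le_rfl,
      ← h.count_eq]
    exact (count_eq_of_forall_not hlt fun q hmq hqs => hm.not_activeAt hmq hqs).symm
  refine .tail (count_eq ▸ h.insertMax_of_le hlt.le) ⟨hpos, by omega,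
    (activeAt_insertIdx_of_le hml h.lt_length le_rfl).mpr active, fun p q _ hq hpq hqs => ?_⟩
  have hqm : q ≤ m := by
    by_contra! hmq
    exact none_right q hmq hqs hq
  rw [insertMax, survives_insertIdx_of_le hml h.lt_length (by omega) hqm]
  exact and_congr_right fun _ => and_iff_left hm.survives_zero

end IsSoleSurvivor

/-- The children of `l` whose maximum is inserted at a site before `s`. -/
def childrenBelow (l : List ℕ) (s : ℕ) : Multiset (List ℕ) :=
  ((Multiset.range s).filter (ActiveAt l)).map (insertMax l)

/-- The children of `l` in the generating tree: a new maximum is inserted at an active site. -/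
def children (l : List ℕ) : Multiset (List ℕ) := childrenBelow l (l.length + 1)

theorem childrenBelow_succ (hs : ActiveAt l s) :
    childrenBelow l (s + 1) = childrenBelow l s + {insertMax l s} := by
  rw [childrenBelow, childrenBelow, Multiset.range_succ, Multiset.filter_cons_of_pos _ hs,
    Multiset.map_cons, ← Multiset.singleton_add, add_comm]

theorem HasLowSuffix.rel_childrenBelow_succ (h : HasLowSuffix l s (k + 1) r)
    {S : Multiset NodeLabel} (hS : Multiset.Rel HasLabel (childrenBelow l s) S) :
    Multiset.Rel HasLabel (childrenBelow l (s + 1)) (S + {.tail k r}) := by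
  rw [childrenBelow_succ (h.activeAt le_rfl)]
  exact hS.add (.cons h.hasLabel_insertMax_self .zero)

theorem HasLowSuffix.rel_children (h : HasLowSuffix l s (k + 1) r) {S : Multiset NodeLabel}
    (hS : Multiset.Rel HasLabel (childrenBelow l s) S) :
    Multiset.Rel HasLabel (children l) (S + NodeLabel.suffix k r) := by
  induction r generalizing s k S with
  | zero => simpa [children, h.length_eq, NodeLabel.suffix] using h.rel_childrenBelow_succ hS
  | succ r ih =>
    rw [NodeLabel.suffix, ← Multiset.singleton_add, ← add_assoc]
    exact ih h.succ (h.rel_childrenBelow_succ hS)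

theorem rel_childrenBelow {f : ℕ → NodeLabel}
    (h : ∀ p < s, ActiveAt l p → HasLabel (insertMax l p) (f (Nat.count (ActiveAt l) p))) :
    Multiset.Rel HasLabel (childrenBelow l s)
      (∑ j ∈ Finset.range (Nat.count (ActiveAt l) s), {f j}) := by
  have sum_eq : ∑ j ∈ Finset.range (Nat.count (ActiveAt l) s), {f j} =
      ((Multiset.range s).filter (ActiveAt l)).map (f ∘ Nat.count (ActiveAt l)) := by
    rw [← Multiset.map_map, map_count_filter_range, Finset.sum_eq_multiset_sum, Finset.range_val,
      ← Multiset.sum_map_singleton ((Multiset.range _).map f), Multiset.map_map]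
    rfl
  rw [sum_eq, childrenBelow, Multiset.rel_map]
  refine Multiset.rel_refl_of_refl_on fun p hp => ?_
  rw [Multiset.mem_filter, Multiset.mem_range] at hp
  exact h p hp.1 hp.2

theorem rel_children_decr (hlt : ∀ x ∈ l, x < l.length) (hlen : l.length = r + 1)
    (hsurv : Survives l 0 0) : Multiset.Rel HasLabel (children l) (NodeLabel.rule (.decr r)) := by
  have h := hasLowSuffix_of_survives_zero hlt hlen hsurv
  refine h.rel_children ?_
  have rel_below := rel_childrenBelow (l := l) (s := 1) (f := fun _ => .decr (r + 1))
    fun p hp _ => by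
      obtain rfl : p = 0 := by omega
      exact hasLabel_decr_insertMax hlt hlen hsurv
  rwa [h.count_eq, Finset.sum_range_one] at rel_below

theorem rel_children_free (h : HasLowSuffix l s (k + 1) r)
    (hfree : ∀ q < s, ActiveAt l q → ¬Survives l 0 q) :
    Multiset.Rel HasLabel (children l) (NodeLabel.rule (.free k r)) := by
  refine h.rel_children ?_
  have rel_below := rel_childrenBelow (l := l) (s := s) (f := fun j => .free j r)
    fun p hp active => h.hasLabel_insertMax_of_not_survives hp active (hfree p hp active)
      fun q _ hqs hq hsurv => hfree q hqs hq (hsurv.mono p.zero_le le_rfl)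
  rwa [h.count_eq] at rel_below

theorem rel_children_tail (h : HasLowSuffix l s (k + 2) r) (hm : IsSoleSurvivor l s m) :
    Multiset.Rel HasLabel (children l) (NodeLabel.rule (.tail k r)) := by
  refine h.rel_children ?_
  have count_self : Nat.count (ActiveAt l) m = k + 1 := by
    have count_succ := count_eq_of_forall_not (P := ActiveAt l) hm.lt
      fun q hmq hqs => hm.not_activeAt hmq hqs
    rw [h.count_eq, Nat.count_succ, if_pos hm.activeAt] at count_succ
    omega
  let f : ℕ → NodeLabel := fun j =>
    if j = 0 then .tail 0 r else if j = k + 1 then .tail k r else .free j r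
  have rel_below := rel_childrenBelow (l := l) (s := s) (f := f) fun p hps active => by
    rcases lt_trichotomy p m with hpm | rfl | hmp
    · rcases p.eq_zero_or_pos with rfl | hp
      · exact hm.hasLabel_insertMax_zero h
      · have count_pos : 0 < Nat.count (ActiveAt l) p :=
          Nat.count_strict_mono activeAt_zero hp
        have count_lt : Nat.count (ActiveAt l) p < k + 1 :=
          count_self ▸ Nat.count_strict_mono active hpm
        simp only [f, count_pos.ne', count_lt.ne, if_false]
        exact hm.hasLabel_insertMax_of_lt h hp hpm active
    · simp only [f, count_self, k.succ_ne_zero, if_false, if_true]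
      exact hm.hasLabel_insertMax_self h
    · exact absurd active (hm.not_activeAt hmp hps)
  rw [h.count_eq, Finset.sum_range_succ, Finset.sum_range_succ', add_comm _ {f 0}] at rel_below
  have middle_eq : ∀ j ∈ Finset.range k, ({f (j + 1)} : Multiset NodeLabel) = {.free (j + 1) r} :=
    fun j hj => by simp [f, (Finset.mem_range.mp hj).ne]
  have last_eq : f (k + 1) = .tail k r := by simp [f]
  rwa [Finset.sum_congr rfl middle_eq, last_eq] at rel_below

theorem rel_children {a : NodeLabel} (h : HasLabel l a) :
    Multiset.Rel HasLabel (children l) a.rule := by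
  cases h with
  | decr hlt hlen hsurv => exact rel_children_decr hlt hlen hsurv
  | free h hfree => exact rel_children_free h hfree
  | tail h hm => exact rel_children_tail h hm

end Labels

section ListPatterns

variable {α : Type*}

theorem ofFn_sublist_ofFn_iff {m n : ℕ} {h : Fin m → α} {g : Fin n → α} :
    (List.ofFn h).Sublist (List.ofFn g) ↔ ∃ f : Fin m → Fin n, StrictMono f ∧ h = g ∘ f := by
  rw [List.sublist_iff_exists_fin_orderEmbedding_get_eq]
  constructor
  · rintro ⟨f, hf⟩
    refine ⟨fun i => (f (i.cast List.length_ofFn.symm)).cast List.length_ofFn,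
      fun i j hij => f.strictMono hij, funext fun i => ?_⟩
    have get_eq := hf (i.cast List.length_ofFn.symm)
    rwa [List.get_ofFn, List.get_ofFn] at get_eq
  · rintro ⟨f, hf, rfl⟩
    refine ⟨OrderEmbedding.ofStrictMono
      (fun i => (f (i.cast List.length_ofFn)).cast List.length_ofFn.symm)
      fun i j hij => hf hij, fun i => ?_⟩
    rw [List.get_ofFn, List.get_ofFn]
    rfl

variable [LinearOrder α] {l u v : List α} {M : α} {p : ℕ}

/-- The list `l` avoids 1342 and 3412, the complements of the patterns 4213 and 2143 of
`AvoidsD`. -/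
def ListAvoidsD (l : List α) : Prop :=
  ∀ a b c d, [a, b, c, d].Sublist l → ¬(a < d ∧ d < b ∧ b < c) ∧ ¬(c < d ∧ d < a ∧ a < b)

theorem listAvoidsD_ofFn_iff {n : ℕ} {g : Fin n → α} :
    ListAvoidsD (List.ofFn g) ↔ ∀ f : Fin 4 → Fin n, StrictMono f →
      ¬(g (f 0) < g (f 3) ∧ g (f 3) < g (f 1) ∧ g (f 1) < g (f 2)) ∧
        ¬(g (f 2) < g (f 3) ∧ g (f 3) < g (f 0) ∧ g (f 0) < g (f 1)) := by
  constructor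
  · refine fun h f hf => h _ _ _ _ ?_
    have sub : (List.ofFn (g ∘ f)).Sublist (List.ofFn g) :=
      ofFn_sublist_ofFn_iff.mpr ⟨f, hf, rfl⟩
    simpa [List.ofFn_succ (n := 3), List.ofFn_succ (n := 2)] using sub
  · intro h a b c d hsub
    have ofFn_eq : [a, b, c, d] = List.ofFn ![a, b, c, d] := by simp [List.ofFn_succ]
    obtain ⟨f, hf, heq⟩ := ofFn_sublist_ofFn_iff.mp (ofFn_eq ▸ hsub)
    have h := h f hf
    simp only [← Function.comp_apply (f := g) (g := f), ← heq] at h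
    exact h

theorem ListAvoidsD.sublist (h : ListAvoidsD v) (huv : u.Sublist v) : ListAvoidsD u :=
  fun a b c d hsub => h a b c d (hsub.trans huv)

theorem ListAvoidsD.activeSplit (h : ListAvoidsD (u ++ M :: v)) (hu : ∀ x ∈ u, x < M) :
    ActiveSplit u v := by
  simp only [ActiveSplit, List.pairwise_iff_forall_sublist]
  refine ⟨fun a ha c b hs hlt => ?_, fun b hb c a hs hlt => ?_⟩
  · have sub := (List.singleton_sublist.mpr ha).append (hs.cons_cons M)
    exact (h a M c b sub).2 ⟨hlt.1, hlt.2, hu a ha⟩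
  · have sub := hs.append ((List.singleton_sublist.mpr hb).cons_cons M)
    exact (h c a M b sub).1 ⟨hlt.1, hlt.2, hu a (hs.mem (by simp))⟩

/- In an occurrence that uses the maximum `M`, it plays the 4: the third entry of 1342 or the
second entry of 3412. -/
theorem listAvoidsD_append_cons (h : ListAvoidsD (u ++ v)) (hsplit : ActiveSplit u v)
    (hu : ∀ x ∈ u, x < M) (hv : ∀ x ∈ v, x < M) : ListAvoidsD (u ++ M :: v) := by
  simp only [ActiveSplit, List.pairwise_iff_forall_sublist] at hsplit
  obtain ⟨after, before⟩ := hsplit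
  intro a b c d hsub
  obtain ⟨s, t', hst, hs, ht'⟩ := List.sublist_append_iff.mp hsub
  rcases List.sublist_cons_iff.mp ht' with ht | ⟨t, rfl, ht⟩
  · exact h a b c d (hst ▸ hs.append ht)
  have lt_left : ∀ x ∈ s, x < M := fun x hx => hu x (hs.mem hx)
  have lt_right : ∀ x ∈ t, x < M := fun x hx => hv x (ht.mem hx)
  rcases s with - | ⟨x, - | ⟨y, - | ⟨z, - | ⟨w, s⟩⟩⟩⟩ <;>
    simp only [List.cons_append, List.nil_append, List.cons.injEq] at hst
  · obtain ⟨rfl, rfl⟩ := hst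
    exact ⟨fun hlt => (lt_right d (by simp)).not_gt hlt.1,
      fun hlt => (lt_right b (by simp)).not_gt hlt.2.2⟩
  · obtain ⟨rfl, rfl, rfl⟩ := hst
    exact ⟨fun hlt => (lt_right c (by simp)).not_gt hlt.2.2,
      fun hlt => after a (hs.mem (by simp)) ht ⟨hlt.1, hlt.2.1⟩⟩
  · obtain ⟨rfl, rfl, rfl, rfl⟩ := hst
    exact ⟨fun hlt => before d (ht.mem (by simp)) hs ⟨hlt.1, hlt.2.1⟩,
      fun hlt => (lt_right d (by simp)).not_gt hlt.1⟩
  · obtain ⟨rfl, rfl, rfl, rfl, rfl⟩ := hst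
    exact ⟨fun hlt => (lt_left b (by simp)).not_gt hlt.2.1,
      fun hlt => (lt_left a (by simp)).not_gt hlt.2.1⟩
  · simp at hst

theorem listAvoidsD_insertIdx_iff (hp : p ≤ l.length) (hM : ∀ x ∈ l, x < M) :
    ListAvoidsD (l.insertIdx p M) ↔ ListAvoidsD l ∧ ActiveAt l p := by
  have take_lt : ∀ x ∈ l.take p, x < M := fun x hx => hM x (List.mem_of_mem_take hx)
  have drop_lt : ∀ x ∈ l.drop p, x < M := fun x hx => hM x (List.mem_of_mem_drop hx)
  constructor
  · refine fun h => ⟨h.sublist (List.sublist_insertIdx ..), ?_⟩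
    rw [insertIdx_eq_take_append_cons_drop hp] at h
    exact h.activeSplit take_lt
  · rintro ⟨h, active⟩
    rw [insertIdx_eq_take_append_cons_drop hp]
    exact listAvoidsD_append_cons (by rwa [List.take_append_drop]) active take_lt drop_lt

end ListPatterns

section Avoiders

variable {n : ℕ} {l x : List ℕ}

open Classical in
/-- The rearrangements of `0, …, n - 1` avoiding 1342 and 3412. -/
noncomputable def avoiders (n : ℕ) : Finset (List ℕ) :=
  {l ∈ (List.range n).permutations.toFinset | ListAvoidsD l}

theorem mem_avoiders : l ∈ avoiders n ↔ l.Perm (List.range n) ∧ ListAvoidsD l := by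
  simp [avoiders]

theorem length_of_mem_avoiders (hl : l ∈ avoiders n) : l.length = n := by
  simpa using (mem_avoiders.mp hl).1.length_eq

theorem lt_of_mem_avoiders (hl : l ∈ avoiders n) : ∀ x ∈ l, x < n := fun _ hx =>
  List.mem_range.mp ((mem_avoiders.mp hl).1.subset hx)

theorem mem_children : x ∈ children l ↔ ∃ p ≤ l.length, ActiveAt l p ∧ insertMax l p = x := by
  simp only [children, childrenBelow, Multiset.mem_map, Multiset.mem_filter, Multiset.mem_range,
    Nat.lt_succ_iff, and_assoc]

theorem insertMax_mem_avoiders_iff {p : ℕ} (hp : p ≤ l.length) :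
    insertMax l p ∈ avoiders (l.length + 1) ↔ l ∈ avoiders l.length ∧ ActiveAt l p := by
  have perm_iff : (insertMax l p).Perm (List.range (l.length + 1)) ↔
      l.Perm (List.range l.length) := by
    have perm_cons : (List.range (l.length + 1)).Perm (l.length :: List.range l.length) := by
      rw [List.range_succ]
      exact List.perm_append_singleton _ _
    rw [insertMax, (List.perm_insertIdx _ l hp).congr_left, perm_cons.congr_right, List.perm_cons]
  rw [mem_avoiders, mem_avoiders, perm_iff, and_assoc]
  refine and_congr_right fun hperm => listAvoidsD_insertIdx_iff hp fun x hx => ?_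
  exact List.mem_range.mp (hperm.subset hx)

theorem erase_insertMax {p : ℕ} (hp : p ≤ l.length) (hl : l.length ∉ l) :
    (insertMax l p).erase l.length = l := by
  rw [insertMax, insertIdx_eq_take_append_cons_drop hp,
    List.erase_append_right _ fun h => hl (List.mem_of_mem_take h), List.erase_cons_head,
    List.take_append_drop]

theorem mem_avoiders_succ : x ∈ avoiders (n + 1) ↔ ∃ l ∈ avoiders n, x ∈ children l := by
  simp only [mem_children]
  constructor
  · intro hx
    obtain ⟨u, v, rfl⟩ := List.append_of_mem ((mem_avoiders.mp hx).1.mem_iff.mpr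
      (List.mem_range.mpr n.lt_succ_self))
    obtain rfl : n = (u ++ v).length := by
      have := length_of_mem_avoiders hx
      grind
    have hp : u.length ≤ (u ++ v).length := by simp
    have insert_eq : insertMax (u ++ v) u.length = u ++ (u ++ v).length :: v := by
      rw [insertMax, insertIdx_eq_take_append_cons_drop hp, List.take_left, List.drop_left]
    obtain ⟨hl, active⟩ := (insertMax_mem_avoiders_iff hp).mp (insert_eq ▸ hx)
    exact ⟨u ++ v, hl, u.length, hp, active, insert_eq⟩
  · rintro ⟨l, hl, p, hp, active, rfl⟩
    obtain rfl := length_of_mem_avoiders hl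
    exact (insertMax_mem_avoiders_iff hp).mpr ⟨hl, active⟩

theorem erase_of_mem_children (hl : l ∈ avoiders n) (hx : x ∈ children l) : x.erase n = l := by
  obtain ⟨p, hp, -, rfl⟩ := mem_children.mp hx
  obtain rfl := length_of_mem_avoiders hl
  exact erase_insertMax hp fun h => (lt_of_mem_avoiders hl _ h).false

theorem nodup_children (hl : l ∈ avoiders n) : (children l).Nodup := by
  have notMem : l.length ∉ l := fun h =>
    ((lt_of_mem_avoiders hl _ h).trans_eq (length_of_mem_avoiders hl).symm).false
  refine Multiset.Nodup.map_on (fun p hp q hq => ?_) ((Multiset.nodup_range _).filter _)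
  rw [Multiset.mem_filter, Multiset.mem_range, Nat.lt_succ_iff] at hp hq
  exact List.injOn_insertIdx_index_of_notMem l l.length notMem hp.1 hq.1

theorem avoiders_succ (n : ℕ) : (avoiders (n + 1)).val = (avoiders n).val.bind children := by
  have nodup_bind : ((avoiders n).val.bind children).Nodup := by
    refine Multiset.nodup_bind.mpr ⟨fun l hl => nodup_children hl,
      (avoiders n).nodup.pairwise fun l hl l' hl' hne => ?_⟩
    refine Multiset.disjoint_left.mpr fun hx hx' => hne ?_
    rw [← erase_of_mem_children hl hx, erase_of_mem_children hl' hx']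
  refine (Multiset.Nodup.ext (avoiders (n + 1)).nodup nodup_bind).mpr fun x => ?_
  rw [Multiset.mem_bind]
  exact mem_avoiders_succ

theorem avoiders_one : avoiders 1 = {[0]} := by
  ext l
  rw [mem_avoiders, Finset.mem_singleton, List.range_one, List.perm_singleton, and_iff_left_iff_imp]
  rintro rfl a b c d hsub
  exact absurd hsub.length_le (by simp)

theorem hasLabel_singleton : HasLabel [0] (.decr 0) :=
  .decr (by simp) rfl ⟨by simp, by simp⟩

theorem card_avoiders_succ (n : ℕ) :
    (avoiders (n + 1)).card = levelCount NodeLabel.rule n (.decr 0) := by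
  have level_sum := sum_map_levelCount (level := fun m => (avoiders m).val) avoiders_succ 1 n
  rw [avoiders_one] at level_sum
  rw [Finset.card_def, add_comm, ← level_sum]
  simpa using levelCount_eq_of_rel (fun _ _ => rel_children) n hasLabel_singleton

end Avoiders

section Complement

variable {n : ℕ}

/-- The value complement of a permutation, in one-line notation. -/
def complementList (σ : Equiv.Perm (Fin n)) : List ℕ := List.ofFn fun i => ((σ i).rev : ℕ)

theorem complementList_injective :
    Function.Injective (complementList : Equiv.Perm (Fin n) → List ℕ) := fun _ _ h =>
  Equiv.ext fun i =>
    Fin.rev_injective (Fin.val_injective (congrFun (List.ofFn_injective h) i))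

theorem patternContains_iff_strictMono {k : ℕ} {σ : Equiv.Perm (Fin n)} {π ρ : Fin k → Fin k}
    (left_inv : Function.LeftInverse ρ π) (right_inv : Function.RightInverse ρ π) :
    PatternContains σ π ↔
      ∃ f : Fin k → Fin n, StrictMono f ∧ StrictMono fun a => σ (f (ρ a)) := by
  refine exists_congr fun f => and_congr_right fun _ => ⟨fun h a b hab => ?_, fun h a b => ?_⟩
  · exact (h _ _).mp (by rwa [right_inv, right_inv])
  · rw [← h.lt_iff_lt, left_inv, left_inv]

theorem patternContains_p4213_iff {σ : Equiv.Perm (Fin n)} :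
    PatternContains σ p4213 ↔ ∃ f : Fin 4 → Fin n, StrictMono f ∧
      σ (f 2) < σ (f 1) ∧ σ (f 1) < σ (f 3) ∧ σ (f 3) < σ (f 0) := by
  rw [patternContains_iff_strictMono (ρ := ![2, 1, 3, 0]) (by decide) (by decide)]
  simp [Fin.strictMono_iff_lt_succ, Fin.forall_fin_succ]

theorem patternContains_p2143_iff {σ : Equiv.Perm (Fin n)} :
    PatternContains σ p2143 ↔ ∃ f : Fin 4 → Fin n, StrictMono f ∧
      σ (f 1) < σ (f 0) ∧ σ (f 0) < σ (f 3) ∧ σ (f 3) < σ (f 2) := by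
  rw [patternContains_iff_strictMono (ρ := ![1, 0, 3, 2]) (by decide) (by decide)]
  simp [Fin.strictMono_iff_lt_succ, Fin.forall_fin_succ]

theorem listAvoidsD_complementList_iff {σ : Equiv.Perm (Fin n)} :
    ListAvoidsD (complementList σ) ↔ AvoidsD σ := by
  rw [complementList, listAvoidsD_ofFn_iff, AvoidsD, PatternAvoids, PatternAvoids,
    patternContains_p4213_iff, patternContains_p2143_iff]
  simp only [Fin.val_fin_lt, Fin.rev_lt_rev]
  grind

theorem exists_complementList_eq_iff {l : List ℕ} :
    (∃ σ : Equiv.Perm (Fin n), complementList σ = l) ↔ l.Perm (List.range n) := by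
  constructor
  · rintro ⟨σ, rfl⟩
    refine (List.perm_ext_iff_of_nodup (List.nodup_ofFn.mpr fun i j h => ?_) List.nodup_range).mpr
      fun x => ?_
    · exact σ.injective (Fin.rev_injective (Fin.val_injective h))
    · rw [List.mem_ofFn, List.mem_range]
      exact ⟨by rintro ⟨i, rfl⟩; exact Fin.is_lt _, fun hx => ⟨σ.symm (Fin.rev ⟨x, hx⟩), by simp⟩⟩
  · intro h
    obtain rfl : l.length = n := by simpa using h.length_eq
    have lt_length : ∀ i, l.get i < l.length := fun i =>
      List.mem_range.mp (h.subset (l.get_mem i))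
    have injective : Function.Injective fun i => Fin.rev ⟨l.get i, lt_length i⟩ := fun i j hij =>
      List.nodup_iff_injective_get.mp (h.nodup_iff.mpr List.nodup_range)
        (congrArg Fin.val (Fin.rev_injective hij))
    refine ⟨Equiv.ofBijective _ (Finite.injective_iff_bijective.mp injective), ?_⟩
    simp only [complementList, Equiv.ofBijective_apply, Fin.rev_rev]
    exact List.ofFn_get l

theorem dCount_eq_card_avoiders (n : ℕ) : dCount n = (avoiders n).card := by
  classical
  have image_eq : avoiders n =
      ({σ | AvoidsD σ} : Finset (Equiv.Perm (Fin n))).image complementList := by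
    ext l
    simp only [mem_avoiders, ← exists_complementList_eq_iff, Finset.mem_image, Finset.mem_filter,
      Finset.mem_univ, true_and, ← listAvoidsD_complementList_iff]
    grind
  rw [image_eq, Finset.card_image_of_injective _ complementList_injective, dCount]
  exact Nat.subtype_card _ (by simp)

end Complement

theorem dCount_succ (n : ℕ) : dCount (n + 1) = levelCount NodeLabel.rule n (.decr 0) := by
  rw [dCount_eq_card_avoiders, card_avoiders_succ]

theorem dCount_gf_algebraic_general (R : Type*) [CommRing R] :
    let z : PowerSeries R := PowerSeries.X
    let D : PowerSeries R := PowerSeries.mk fun n => if n = 0 then 0 else (dCount n : R)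
    (1 - 10 * z + 24 * z ^ 2 - 20 * z ^ 3 + 4 * z ^ 4) * D ^ 2
      - 2 * (1 - 2 * z) * (-1 + 5 * z - 7 * z ^ 2 + 2 * z ^ 3) * D
      + z * (z - 2) * (1 - 2 * z) ^ 2 = 0 := by
  intro z D
  have D_eq : D = X * NodeLabel.rootSeries R := by
    ext n
    cases n with
    | zero => simp [D]
    | succ n => simp [D, NodeLabel.rootSeries, coeff_succ_X_mul, dCount_succ]
  rw [D_eq]
  exact NodeLabel.rootSeries_algebraic R

theorem dCount_gf_algebraic :
    let z : PowerSeries ℚ := PowerSeries.X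
    let D : PowerSeries ℚ := PowerSeries.mk fun n => if n = 0 then 0 else (dCount n : ℚ)
    (1 - 10 * z + 24 * z ^ 2 - 20 * z ^ 3 + 4 * z ^ 4) * D ^ 2
      - 2 * (1 - 2 * z) * (-1 + 5 * z - 7 * z ^ 2 + 2 * z ^ 3) * D
      + z * (z - 2) * (1 - 2 * z) ^ 2 = 0 :=
  dCount_gf_algebraic_general ℚ
end
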